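/- Let ν be a partition, l a positive integer, and ζ a primitive l-th root of unity. Then Q'_{ν^l}(x; q, ζ) = (−1)^{(l−1)|ν|} · (p_l ∘ h_ν)(x), where ν^l is the partition in which each part of ν is repeated l times. -/

import Mathlib

open MvPolynomial

noncomputable section MacdonaldPreliminaries

/-! ### Base fields: `KK = ℂ(q)` and `FF = ℂ(q)(t)` -/

/-- The field `ℂ(q)` of rational functions in the indeterminate `q`. -/
abbrev KK : Type := RatFunc ℂ

/-- The field `ℂ(q)(t) = ℂ(q,t)`, rational functions in `t` over `ℂ(q)`. -/
abbrev FF : Type := RatFunc KK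

/-- The indeterminate `q`, as an element of `ℂ(q)`. -/
def qK : KK := RatFunc.X

/-- The indeterminate `q`, as an element of `ℂ(q,t)`. -/
def qF : FF := RatFunc.C qK

/-- The indeterminate `t`, as an element of `ℂ(q,t)`. -/
def tF : FF := RatFunc.X

/-! ### The ring of symmetric functions

We model the ring `Λ_R` of symmetric functions over `R` as the free commutative
`R`-algebra on the power sums `p₁, p₂, p₃, …`, i.e. as the polynomial ring in
countably many variables `X k`, `k : ℕ+`, where `X k` represents the power sum `p_k`. -/

/-- The ring of symmetric functions over `R`: polynomials in the power sums `p_k = X k`. -/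
abbrev SymFn (R : Type) [CommSemiring R] : Type := MvPolynomial ℕ+ R

section Core

variable {R : Type} [Field R]

/-- The power sum `p_d` for `d : ℕ`, with `p_0 = 1` by convention. -/
def pN (d : ℕ) : SymFn R := if h : 0 < d then X (⟨d, h⟩ : ℕ+) else 1

/-- `p_λ = ∏ p_{λᵢ}` for a partition `λ` given as a multiset of positive parts. -/
def pPar (lam : Multiset ℕ+) : SymFn R := (lam.map fun k => (X k : SymFn R)).prod

/-- The complete homogeneous symmetric functions, defined by Newton's recursion
`n·h_n = ∑_{i=1}^n p_i · h_{n-i}` with `h_0 = 1`. -/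
def hsym : ℕ → SymFn R
  | 0 => 1
  | (n+1) => (((n : R) + 1)⁻¹) • ∑ i ∈ Finset.range (n+1),
      (X (⟨i+1, Nat.succ_pos i⟩ : ℕ+) : SymFn R) * hsym (n - i)
decreasing_by exact Nat.lt_succ_of_le (Nat.sub_le n i)

/-- `h_z` for an integer index, vanishing for negative `z` (used in Jacobi–Trudi). -/
def hInt (z : ℤ) : SymFn R := if 0 ≤ z then hsym (R := R) z.toNat else 0

/-- The parts of a partition (a multiset of positive integers), sorted decreasingly. -/
def descParts (lam : Multiset ℕ+) : List ℕ :=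
  ((lam.map fun a : ℕ+ => (a : ℕ)).sort (· ≤ ·)).reverse

/-- The weight `|λ|` of a partition. -/
def wt (lam : Multiset ℕ+) : ℕ := (lam.map fun a : ℕ+ => (a : ℕ)).sum

/-- The Schur function `s_λ`, via the Jacobi–Trudi formula
`s_λ = det(h_{λᵢ - i + j})₁≤i,j≤ℓ`. -/
def schur (lam : Multiset ℕ+) : SymFn R :=
  Matrix.det (Matrix.of fun i j : Fin (Multiset.card lam) =>
    hInt (R := R) ((((descParts lam).getD i 0 : ℕ) : ℤ) + (j : ℤ) - (i : ℤ)))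

/-- `h_ν = ∏ h_{νⱼ}` for a partition `ν`. -/
def hPar (nu : Multiset ℕ+) : SymFn R := (nu.map fun a => hsym (R := R) (a : ℕ)).prod

/-! ### Inner products -/

/-- The `(q,t)`-deformed weight `z_λ(q,t)` attached to the monomial `∏ (X k)^(m k)`,
namely `∏_k (m k)! · k^(m k) · ((1-q^k)/(1-t^k))^(m k)`. -/
def zwtQT (q t : R) (m : ℕ+ →₀ ℕ) : R :=
  ∏ k ∈ m.support,
    ((Nat.factorial (m k) : R) * ((k : ℕ) : R) ^ (m k) *
      ((1 - q ^ (k : ℕ)) / (1 - t ^ (k : ℕ))) ^ (m k))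

/-- The Macdonald inner product `⟨·,·⟩_{q,t}`, defined on the power sum basis by
`⟨p_λ, p_μ⟩_{q,t} = δ_{λμ} z_λ(q,t)`. -/
def innerQT (q t : R) (f g : SymFn R) : R :=
  ∑ m ∈ f.support, MvPolynomial.coeff m f * MvPolynomial.coeff m g * zwtQT q t m

/-- The classical weight `z_λ = ∏_k (m k)! k^(m k)` attached to a monomial. -/
def zwtH (m : ℕ+ →₀ ℕ) : R :=
  ∏ k ∈ m.support, ((Nat.factorial (m k) : R) * ((k : ℕ) : R) ^ (m k))

/-- The standard Hall inner product, `⟨p_λ, p_μ⟩ = δ_{λμ} z_λ`. -/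
def innerH (f g : SymFn R) : R :=
  ∑ m ∈ f.support, MvPolynomial.coeff m f * MvPolynomial.coeff m g * zwtH (R := R) m

/-- The internal (Kronecker) product `⋆`, determined by `p_λ ⋆ p_μ = δ_{λμ} z_λ p_λ`. -/
def star (f g : SymFn R) : SymFn R :=
  ∑ m ∈ f.support,
    MvPolynomial.monomial m (MvPolynomial.coeff m f * MvPolynomial.coeff m g * zwtH (R := R) m)

/-! ### Dominance order and the Macdonald basis -/

/-- Sum of the `k` largest parts of `λ`. -/
def pSum (lam : Multiset ℕ+) (k : ℕ) : ℕ := ((descParts lam).take k).sum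

/-- `μ` is strictly dominated by `λ`: same weight, `μ ≠ λ`, and all partial sums of the
decreasingly sorted parts of `μ` are at most those of `λ`. -/
def StrictDom (mu lam : Multiset ℕ+) : Prop :=
  mu ≠ lam ∧ wt mu = wt lam ∧ ∀ k, pSum mu k ≤ pSum lam k

/-- Characterization of the Macdonald basis `P_λ(x;q,t)` (obtained from the Schur basis by
Gram–Schmidt orthogonalization w.r.t. `⟨·,·⟩_{q,t}`): `P_λ` is unitriangular with respect to
the Schur functions of strictly dominated partitions, and the `P_λ` are pairwise orthogonal. -/
def IsMacdonaldBasis (q t : R) (P : Multiset ℕ+ → SymFn R) : Prop :=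
  (∀ lam, P lam - schur lam ∈
      Submodule.span R ((schur (R := R)) '' {mu | StrictDom mu lam})) ∧
  (∀ lam mu, lam ≠ mu → innerQT q t (P lam) (P mu) = 0)

/-- `Q_λ = P_λ / ⟨P_λ, P_λ⟩_{q,t}`. -/
def Qfam (q t : R) (P : Multiset ℕ+ → SymFn R) (lam : Multiset ℕ+) : SymFn R :=
  (innerQT q t (P lam) (P lam))⁻¹ • P lam

/-- The algebra endomorphism of `Λ_R` rescaling each power sum: `p_k ↦ g k · p_k`. -/
def scaleHom (g : ℕ+ → R) : SymFn R →ₐ[R] SymFn R :=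
  aeval fun k : ℕ+ => (C (g k) * X k : SymFn R)

/-- The modified Macdonald polynomial `Q'_λ(x;q,t) = Q_λ(((1-q)/(1-t))·x; q,t)`,
the image of `Q_λ` under `p_k ↦ ((1-q^k)/(1-t^k))·p_k`. -/
def Qprime (q t : R) (P : Multiset ℕ+ → SymFn R) (lam : Multiset ℕ+) : SymFn R :=
  scaleHom (fun k => (1 - q ^ (k : ℕ)) / (1 - t ^ (k : ℕ))) (Qfam q t P lam)

/-! ### Plethysm -/

/-- Plethysm by the power sum on the left: `p_l ∘ f`, the ring endomorphism `p_k ↦ p_{lk}`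
applied to `f`. -/
def plethP (l : ℕ+) : SymFn R →ₐ[R] SymFn R :=
  aeval fun k : ℕ+ => (X (l * k) : SymFn R)

/-- General plethysm `g ∘ f`: the algebra homomorphism in `g` sending `p_k` to `p_k ∘ f`. -/
def pleth (g f : SymFn R) : SymFn R :=
  aeval (fun k : ℕ+ => plethP k f) g

/-! ### Cells of a partition: arms, legs, the constants `c_μ`, `c'_μ` and `n(μ)` -/

/-- Arm length of the (0-indexed) cell `(i,j)` of `λ`: `λ_i - j - 1`. -/
def armM (lam : Multiset ℕ+) (i j : ℕ) : ℕ := (descParts lam).getD i 0 - (j + 1)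

/-- Leg length of the (0-indexed) cell `(i,j)` of `λ`: the number of cells below it
in the same column. -/
def legM (lam : Multiset ℕ+) (i j : ℕ) : ℕ :=
  ((List.range (descParts lam).length).filter
    (fun i' => decide (i < i') && decide (j < (descParts lam).getD i' 0))).length

/-- Product of a quantity over all cells of the partition `λ`. -/
def cellProd {S : Type} [CommMonoid S] (lam : Multiset ℕ+) (f : ℕ → ℕ → S) : S :=
  ∏ i ∈ Finset.range (descParts lam).length,
    ∏ j ∈ Finset.range ((descParts lam).getD i 0), f i j

/-- `c_μ(q,t) = ∏_{s∈μ} (1 - q^{a(s)} t^{l(s)+1})`. -/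
def cLow (q t : R) (lam : Multiset ℕ+) : R :=
  cellProd lam fun i j => 1 - q ^ (armM lam i j) * t ^ (legM lam i j + 1)

/-- `c'_μ(q,t) = ∏_{s∈μ} (1 - q^{a(s)+1} t^{l(s)})`. -/
def cUp (q t : R) (lam : Multiset ℕ+) : R :=
  cellProd lam fun i j => 1 - q ^ (armM lam i j + 1) * t ^ (legM lam i j)

/-- `n(λ) = ∑ (i-1)·λ_i`. -/
def nInv (lam : Multiset ℕ+) : ℕ :=
  ∑ i ∈ Finset.range (descParts lam).length, i * (descParts lam).getD i 0

/-- The modified Macdonald polynomial of Haglund–Haiman–Loehr,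
`H̃_μ(x;q,t) = t^{n(μ)} J_μ(x/(1-t⁻¹); q, t⁻¹)`, where `J_μ(x;q,t) = c_μ(q,t) P_μ(x;q,t)`
and `Pinv` is the Macdonald basis at parameters `(q, t⁻¹)`. -/
def Htilde (q t : R) (Pinv : Multiset ℕ+ → SymFn R) (lam : Multiset ℕ+) : SymFn R :=
  C (t ^ nInv lam) *
    scaleHom (fun k => (1 - (t⁻¹) ^ (k : ℕ))⁻¹) (C (cLow q t⁻¹ lam) * Pinv lam)

/-! ### Cyclic characters -/

/-- The Ramanujan (Von Sterneck) sum `c(j,d)`: the sum of the `j`-th powers of the primitive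
`d`-th roots of unity (computed in the domain `R`). -/
def cRam [IsDomain R] (j d : ℕ) : R := ∑ z ∈ primitiveRoots d R, z ^ j

/-- The Frobenius characteristic `l_k^{(j)} = (1/k) ∑_{d ∣ k} c(j,d) p_d^{k/d}` of the
representation of `S_k` induced from the `j`-th character of the cyclic subgroup generated
by a `k`-cycle. -/
def lchar [IsDomain R] (k j : ℕ) : SymFn R :=
  ((k : R))⁻¹ • ∑ d ∈ Nat.divisors k, (cRam (R := R) j d) • ((pN (R := R) d) ^ (k / d))

end Core

/-! ### Specialization `t = ζ` and evaluation maps -/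

/-- Evaluation of a rational function in `t` over `ℂ(q)` at a point `c : ℂ(q)`. -/
def evalT (c : KK) (x : FF) : KK := RatFunc.eval (RingHom.id KK) c x

/-- Coefficientwise specialization `t = c` of a symmetric function over `ℂ(q,t)`. -/
def specT (c : KK) (f : SymFn FF) : SymFn KK :=
  ∑ m ∈ f.support, MvPolynomial.monomial m (evalT c (MvPolynomial.coeff m f))

/-- Evaluation `f ↦ f(1, ζ, ζ², …, ζ^{l-1}; q, ζ)`: substitute the finite alphabet
`x_i = ζ^{i-1}` (`1 ≤ i ≤ l`) and then specialize `t = ζ`. -/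
def macEvalRoots (l : ℕ) (z : ℂ) (f : SymFn FF) : KK :=
  evalT (RatFunc.C z)
    ((aeval fun k : ℕ+ =>
        ∑ i ∈ Finset.range l, (RatFunc.C (RatFunc.C z) : FF) ^ (i * (k : ℕ))) f)

/-- Evaluation of a symmetric function over `ℂ(q,t)` at the finite alphabet
`(1, t, t², …, t^{l-1})`. -/
def evalAlphT (l : ℕ) : SymFn FF →ₐ[FF] FF :=
  aeval fun k : ℕ+ => ∑ i ∈ Finset.range l, tF ^ (i * (k : ℕ))

/-- Congruence to `0` modulo the cyclotomic polynomial `Φ_l(t)` for a rational function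
in `t`: `x = Φ_l(t) · (a/b)` with `b` coprime to `Φ_l`. -/
def CongrModPhi (l : ℕ) (x : FF) : Prop :=
  ∃ a b : Polynomial KK, IsCoprime b (Polynomial.cyclotomic l KK) ∧
    x = algebraMap (Polynomial KK) FF (Polynomial.cyclotomic l KK) *
      (algebraMap (Polynomial KK) FF a / algebraMap (Polynomial KK) FF b)

/-- The finite set of all partitions of `n`, as multisets of positive integers. -/
def partitionsOf (n : ℕ) : Finset (Multiset ℕ+) :=
  Finset.univ.image fun pi : Nat.Partition n =>
    pi.parts.attach.map fun a => (⟨a.1, pi.parts_pos a.2⟩ : ℕ+)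

end MacdonaldPreliminaries

noncomputable section

open MvPolynomial

/-!
The functions `Q'_λ(x; q⁻¹, t)` are eigenvectors, with leading term `h_λ`, of the Macdonald operator
`f ↦ ∑_N h_N[(q - 1) X] · [z^N] f[X + (1 - t) z]` with the constants subtracted. At `t = ζ` this
operator kills the image of `p_l ∘ -` and is linear over it, because translating by `(1 - ζ) z`
does not move the `p_k` with `l ∣ k`, and its eigenvalue at `λ` vanishes only for `λ = ν^l`. Hence
the value at `t = ζ` of a multiple of `Q'_{ν^l}` without pole or zero there has the form `p_l ∘ f`.

The degenerate operator does not determine `f`, but the eigenvalue equation to first order in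
`t - ζ` does. It says that `f` is deformable with a derivative of the eigenvalue proportional to
`∑ (q^{ν_i} - 1)`, and deformability is multiplicative, with derivatives adding up. For `ν = (n)`,
triangularity forces `f` to be a multiple of `h_n`, so every `h_κ` is deformable; as the numbers
`∑ (q^{κ_i} - 1)` separate partitions, `f` is a multiple of `h_ν`. Comparing the coefficients of the
leading term `h_{ν^l}` yields the scalar `(-1)^{(l - 1) |ν|}`.
-/

namespace Macdonald

/-! ### Series with a given logarithmic derivative -/

section LogDeriv

open PowerSeries (derivative)

variable {S : Type*} [CommRing S]

theorem eq_zero_of_derivative_eq_mul [IsDomain S] [CharZero S] {Y P : PowerSeries S}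
    (h₀ : PowerSeries.constantCoeff Y = 0) (h : derivative S Y = P * Y) : Y = 0 := by
  ext n
  induction n using Nat.strong_induction_on with
  | _ n ih =>
    rcases n with _ | n
    · rwa [PowerSeries.coeff_zero_eq_constantCoeff_apply]
    · refine mul_right_cancel₀ (Nat.cast_add_one_ne_zero n) ?_
      rw [← PowerSeries.coeff_derivative, h, PowerSeries.coeff_mul, map_zero, zero_mul]
      refine Finset.sum_eq_zero fun x hx => ?_
      rw [ih x.2 (Nat.lt_succ_of_le (Finset.HasAntidiagonal.antidiagonal.snd_le hx)), map_zero,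
        mul_zero]

/-- `H` has constant term `1` and logarithmic derivative `P`, that is `H = exp (∫ P)`. -/
structure HasLogDeriv (H P : PowerSeries S) : Prop where
  constantCoeff_eq_one : PowerSeries.constantCoeff H = 1
  derivative_eq : derivative S H = P * H

namespace HasLogDeriv

variable {H H' P P' : PowerSeries S}

theorem unique [IsDomain S] [CharZero S] (hH : HasLogDeriv H P) (hH' : HasLogDeriv H' P) :
    H = H' := by
  refine sub_eq_zero.1 (eq_zero_of_derivative_eq_mul (P := P) ?_ ?_)
  · rw [map_sub, hH.constantCoeff_eq_one, hH'.constantCoeff_eq_one, sub_self]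
  · rw [map_sub, hH.derivative_eq, hH'.derivative_eq, mul_sub]

theorem one : HasLogDeriv (1 : PowerSeries S) 0 :=
  ⟨map_one _, by rw [PowerSeries.derivative_one, zero_mul]⟩

theorem mul (hH : HasLogDeriv H P) (hH' : HasLogDeriv H' P') :
    HasLogDeriv (H * H') (P + P') where
  constantCoeff_eq_one := by
    rw [map_mul, hH.constantCoeff_eq_one, hH'.constantCoeff_eq_one, one_mul]
  derivative_eq := by
    rw [Derivation.leibniz, hH.derivative_eq, hH'.derivative_eq, smul_eq_mul, smul_eq_mul]
    ring

theorem prod {ι : Type*} (s : Finset ι) {H P : ι → PowerSeries S}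
    (h : ∀ i ∈ s, HasLogDeriv (H i) (P i)) : HasLogDeriv (∏ i ∈ s, H i) (∑ i ∈ s, P i) := by
  classical
  induction s using Finset.induction_on with
  | empty => exact one
  | insert i s hi ih =>
    rw [Finset.prod_insert hi, Finset.sum_insert hi]
    exact (h i (Finset.mem_insert_self i s)).mul
      (ih fun j hj => h j (Finset.mem_insert_of_mem hj))

theorem map {S' : Type*} [CommRing S'] (f : S →+* S') (hH : HasLogDeriv H P) :
    HasLogDeriv (PowerSeries.map f H) (PowerSeries.map f P) where
  constantCoeff_eq_one := by
    rw [← PowerSeries.coeff_zero_eq_constantCoeff_apply, PowerSeries.coeff_map,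
      PowerSeries.coeff_zero_eq_constantCoeff_apply, hH.constantCoeff_eq_one, map_one]
  derivative_eq := by
    rw [← map_mul, ← hH.derivative_eq]
    ext n
    simp only [PowerSeries.coeff_derivative, PowerSeries.coeff_map, map_mul, map_add, map_natCast,
      map_one]

theorem rescale (a : S) (hH : HasLogDeriv H P) :
    HasLogDeriv (PowerSeries.rescale a H) (PowerSeries.C a * PowerSeries.rescale a P) where
  constantCoeff_eq_one := by
    rw [← PowerSeries.coeff_zero_eq_constantCoeff_apply, PowerSeries.coeff_rescale, pow_zero,
      one_mul, PowerSeries.coeff_zero_eq_constantCoeff_apply, hH.constantCoeff_eq_one]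
  derivative_eq := by
    rw [mul_assoc, ← map_mul, ← hH.derivative_eq]
    ext n
    simp only [PowerSeries.coeff_derivative, PowerSeries.coeff_rescale, PowerSeries.coeff_C_mul]
    ring

theorem expand {p : ℕ} (hp : p ≠ 0) (hH : HasLogDeriv H P) :
    HasLogDeriv (PowerSeries.expand p hp H)
      (PowerSeries.expand p hp P * ((p : PowerSeries S) * PowerSeries.X ^ (p - 1))) where
  constantCoeff_eq_one := by rw [PowerSeries.constantCoeff_expand, hH.constantCoeff_eq_one]
  derivative_eq := by
    rw [PowerSeries.expand_apply, PowerSeries.derivative_subst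
      (PowerSeries.HasSubst.X_pow hp), hH.derivative_eq,
      ← PowerSeries.expand_apply (R := S) p hp, map_mul,
      PowerSeries.derivative_pow, PowerSeries.derivative_X]
    simp only [PowerSeries.expand_apply]
    ring

theorem one_sub_C_mul_X (a : S) :
    HasLogDeriv (1 - PowerSeries.C a * PowerSeries.X) (-PowerSeries.mk fun n => a ^ (n + 1)) where
  constantCoeff_eq_one := by simp
  derivative_eq := by
    have hd : derivative S (1 - PowerSeries.C a * PowerSeries.X) = -PowerSeries.C a := by
      simp
    rw [hd]
    ext n
    rw [mul_sub, mul_one, neg_mul, sub_neg_eq_add, ← mul_assoc, mul_comm _ (PowerSeries.C a),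
      mul_assoc]
    rcases n with _ | n
    · simp
    · rw [map_add, PowerSeries.coeff_C_mul, PowerSeries.coeff_succ_mul_X, map_neg, map_neg,
        PowerSeries.coeff_succ_C, PowerSeries.coeff_mk, PowerSeries.coeff_mk]
      ring

end HasLogDeriv

end LogDeriv

/-! ### The series of power sums and of complete symmetric functions -/

section Series

/-- The series `∑ p_{n+1} zⁿ` of power sums. -/
def pSeries (A : Type) [CommSemiring A] : PowerSeries (SymFn A) :=
  PowerSeries.mk fun n => X n.succPNat

variable {R : Type} [Field R]

/-- The series `∑ hₙ zⁿ` of complete homogeneous symmetric functions. -/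
def hSeries (R : Type) [Field R] : PowerSeries (SymFn R) :=
  PowerSeries.mk hsym

theorem hsym_zero : hsym (R := R) 0 = 1 := by rw [hsym]

variable [CharZero R]

theorem hasLogDeriv_hSeries : HasLogDeriv (hSeries R) (pSeries R) where
  constantCoeff_eq_one := by
    rw [← PowerSeries.coeff_zero_eq_constantCoeff_apply, hSeries, PowerSeries.coeff_mk, hsym_zero]
  derivative_eq := by
    ext1 n
    have hn : ((n : R) + 1) ≠ 0 := Nat.cast_add_one_ne_zero n
    have hcast : ((n : SymFn R) + 1) = C ((n : R) + 1) := by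
      rw [map_add, map_natCast, map_one]
    rw [PowerSeries.coeff_derivative, PowerSeries.coeff_mul, hSeries, PowerSeries.coeff_mk, hsym,
      hcast, smul_eq_C_mul, mul_comm, ← mul_assoc, ← C_mul, mul_inv_cancel₀ hn, C_1, one_mul,
      Finset.Nat.sum_antidiagonal_eq_sum_range_succ_mk]
    simp only [PowerSeries.coeff_mk, pSeries]
    rfl

theorem natCast_mul_pderiv_hSeries (k : ℕ+) :
    ((k : ℕ) : PowerSeries (SymFn R)) * PowerSeries.mk (fun n => pderiv k (hsym (R := R) n)) =
      PowerSeries.X ^ (k : ℕ) * hSeries R := by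
  set D : PowerSeries (SymFn R) := PowerSeries.mk fun n => pderiv k (hsym n)
  have hH := (hasLogDeriv_hSeries (R := R)).derivative_eq
  have hD : PowerSeries.derivative _ D =
      pSeries R * D + PowerSeries.X ^ ((k : ℕ) - 1) * hSeries R := by
    ext1 n
    have hn := congrArg (pderiv k) (congrArg (PowerSeries.coeff n) hH)
    have hp (i : ℕ) : pderiv k (X (R := R) i.succPNat) = if i = k - 1 then 1 else 0 := by
      rw [pderiv_X, Pi.single_apply]
      refine if_congr ?_ rfl rfl
      rw [← PNat.coe_inj, Nat.succPNat_coe]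
      have := k.pos
      omega
    rw [PowerSeries.coeff_derivative, PowerSeries.coeff_mul, map_sum] at hn
    rw [PowerSeries.coeff_derivative, map_add, PowerSeries.coeff_mul, PowerSeries.coeff_mul,
      ← Finset.sum_add_distrib]
    simp only [hSeries, pSeries, D, PowerSeries.coeff_mk, Derivation.leibniz, map_add,
      Derivation.map_natCast, Derivation.map_one_eq_zero, hp, smul_eq_mul,
      PowerSeries.coeff_X_pow] at hn ⊢
    simpa only [add_zero, mul_zero, zero_add, mul_comm] using hn
  refine sub_eq_zero.1 (eq_zero_of_derivative_eq_mul (P := pSeries R) ?_ ?_)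
  · simp [D, hsym_zero]
  · rw [map_sub, Derivation.leibniz, Derivation.leibniz, hD, hH, PowerSeries.derivative_pow,
      PowerSeries.derivative_X, Derivation.map_natCast]
    simp only [smul_eq_mul]
    ring

theorem natCast_mul_pderiv_hsym (k : ℕ+) (n : ℕ) :
    ((k : ℕ) : SymFn R) * pderiv k (hsym n) = if (k : ℕ) ≤ n then hsym (n - k) else 0 := by
  have h := congrArg (PowerSeries.coeff n) (natCast_mul_pderiv_hSeries (R := R) k)
  rwa [← map_natCast PowerSeries.C, PowerSeries.coeff_C_mul, PowerSeries.coeff_mk,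
    PowerSeries.coeff_X_pow_mul', hSeries, PowerSeries.coeff_mk] at h

theorem map_hsym {R' : Type} [Field R'] [CharZero R'] (f : R →+* R') (n : ℕ) :
    MvPolynomial.map f (hsym n) = hsym n := by
  have h := hasLogDeriv_hSeries.map (MvPolynomial.map f)
  have hp : PowerSeries.map (MvPolynomial.map f) (pSeries R) = pSeries R' := by
    ext1 n
    simp only [pSeries, PowerSeries.coeff_map, PowerSeries.coeff_mk, map_X]
  rw [hp] at h
  simpa only [hSeries, PowerSeries.coeff_map, PowerSeries.coeff_mk] using
    congrArg (PowerSeries.coeff n) (h.unique hasLogDeriv_hSeries)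

theorem map_hInt {R' : Type} [Field R'] [CharZero R'] (f : R →+* R') (z : ℤ) :
    MvPolynomial.map f (hInt z) = hInt z := by
  unfold hInt
  split_ifs
  · exact map_hsym f _
  · exact map_zero _

theorem map_schur {R' : Type} [Field R'] [CharZero R'] (f : R →+* R') (lam : Multiset ℕ+) :
    MvPolynomial.map f (schur lam) = schur lam := by
  rw [schur, schur, RingHom.map_det]
  congr 1
  ext1 i j
  exact map_hInt f _

theorem map_scaleHom {A B : Type} [Field A] [Field B] (f : A →+* B) (c : ℕ+ → A) (g : SymFn A) :
    MvPolynomial.map f (scaleHom c g) = scaleHom (fun k => f (c k)) (MvPolynomial.map f g) := by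
  induction g using MvPolynomial.induction_on with
  | C a => simp only [scaleHom, map_C, aeval_C, algebraMap_eq]
  | add p q hp hq => simp only [map_add, hp, hq]
  | mul_X p k hp => rw [map_mul, map_mul, hp, map_mul, map_mul]; simp [scaleHom]

theorem scaleHom_hSeries_mul_hSeries (q : R) :
    PowerSeries.map (scaleHom fun k : ℕ+ => q ^ (k : ℕ) - 1).toRingHom (hSeries R) * hSeries R =
      PowerSeries.rescale (C q) (hSeries R) := by
  refine HasLogDeriv.unique ((hasLogDeriv_hSeries.map _).mul hasLogDeriv_hSeries) ?_
  convert hasLogDeriv_hSeries.rescale (C q : SymFn R) using 1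
  ext1 n
  simp only [pSeries, scaleHom, map_add, PowerSeries.coeff_map, PowerSeries.coeff_C_mul,
    PowerSeries.coeff_rescale, PowerSeries.coeff_mk, AlgHom.toRingHom_eq_coe, RingHom.coe_coe,
    aeval_X, Nat.succPNat_coe, Nat.succ_eq_add_one, map_sub, map_pow,
    map_one]
  ring

theorem sum_primitiveRoot_pow {S : Type*} [CommRing S] [IsDomain S] {l : ℕ} {ζ : S}
    (hζ : IsPrimitiveRoot ζ l) (n : ℕ) :
    ∑ i ∈ Finset.range l, (ζ ^ i) ^ n = if l ∣ n then (l : S) else 0 := by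
  simp only [← pow_mul, mul_comm _ n]
  simp only [pow_mul]
  split_ifs with hd
  · simp [(hζ.pow_eq_one_iff_dvd n).2 hd]
  · have hne : ζ ^ n - 1 ≠ 0 := sub_ne_zero.2 fun h => hd ((hζ.pow_eq_one_iff_dvd n).1 h)
    refine (mul_eq_zero.1 ?_).resolve_right hne
    rw [geom_sum_mul, ← pow_mul, mul_comm, pow_mul, hζ.pow_eq_one, one_pow, sub_self]

theorem prod_rescale_hSeries (l : ℕ+) {ζ : R} (hζ : IsPrimitiveRoot ζ l) :
    ∏ i ∈ Finset.range l, PowerSeries.rescale (C ζ ^ i) (hSeries R) =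
      PowerSeries.expand (l : ℕ) l.ne_zero
        (PowerSeries.map (plethP (R := R) l).toRingHom (hSeries R)) := by
  refine HasLogDeriv.unique
    (HasLogDeriv.prod _ fun i _ => hasLogDeriv_hSeries.rescale (C ζ ^ i : SymFn R)) ?_
  convert (hasLogDeriv_hSeries.map (plethP (R := R) l).toRingHom).expand l.ne_zero using 1
  ext1 n
  have hC : IsPrimitiveRoot (C ζ : SymFn R) l := hζ.map_of_injective (C_injective _ _)
  have hsum : PowerSeries.coeff n (∑ i ∈ Finset.range l, PowerSeries.C (C ζ ^ i : SymFn R) *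
      PowerSeries.rescale (C ζ ^ i) (pSeries R)) =
      if (l : ℕ) ∣ n + 1 then (l : SymFn R) * X n.succPNat else 0 := by
    simp only [map_sum, PowerSeries.coeff_C_mul, PowerSeries.coeff_rescale, pSeries,
      PowerSeries.coeff_mk, ← mul_assoc, ← pow_succ', ← Finset.sum_mul,
      sum_primitiveRoot_pow hC, ite_mul, zero_mul]
  rw [hsum, mul_left_comm, ← map_natCast PowerSeries.C, PowerSeries.coeff_C_mul]
  split_ifs with hd
  · obtain ⟨_ | k, hk⟩ := hd
    · simp at hk
    · have hl := l.pos
      have hn : n = l * k + (l - 1) := by rw [mul_add] at hk; omega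
      have hX : n.succPNat = l * k.succPNat := PNat.eq (by simpa using hk)
      rw [hX, hn, PowerSeries.coeff_mul_X_pow, PowerSeries.coeff_expand_mul]
      simp [pSeries, plethP]
  · rw [PowerSeries.coeff_mul_X_pow']
    split_ifs with hle
    · rw [PowerSeries.coeff_expand_of_not_dvd, mul_zero]
      refine fun h => hd ?_
      have hl := l.pos
      have := (Nat.dvd_add_right (dvd_refl (l : ℕ))).2 h
      rwa [show (l : ℕ) + (n - (l - 1)) = n + 1 by omega] at this
    · rw [mul_zero]

end Series

/-! ### The vertex operator -/

section VertexOperator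

variable {A : Type} [CommRing A]

/-- The translation `f ↦ f[X + d z]` of the alphabet, `p_k ↦ p_k + d_k z^k`. -/
def translate (d : ℕ+ → A) : SymFn A →ₐ[A] Polynomial (SymFn A) :=
  aeval fun k : ℕ+ => Polynomial.C (X k) + Polynomial.C (C (d k)) * Polynomial.X ^ (k : ℕ)

/-- The umbral evaluation `∑ a_N z^N ↦ ∑ a_N G_N`. -/
def umbral (G : ℕ → SymFn A) : Polynomial (SymFn A) →ₗ[SymFn A] SymFn A :=
  Polynomial.lsum fun n => LinearMap.toSpanSingleton (SymFn A) (SymFn A) (G n)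

/-- The operator `f ↦ ∑_N G_N · [z^N] f[X + (1 - u) z]`. -/
def vertexOp (u : A) (G : ℕ → SymFn A) : SymFn A →ₗ[A] SymFn A :=
  ((umbral G).restrictScalars A) ∘ₗ (translate fun k => 1 - u ^ (k : ℕ)).toLinearMap

theorem vertexOp_apply (u : A) (G : ℕ → SymFn A) (f : SymFn A) :
    vertexOp u G f = umbral G (translate (fun k => 1 - u ^ (k : ℕ)) f) := rfl

theorem translate_X (d : ℕ+ → A) (k : ℕ+) : translate d (X k) =
    Polynomial.C (X k) + Polynomial.C (C (d k)) * Polynomial.X ^ (k : ℕ) := by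
  rw [translate, aeval_X]

theorem translate_C (d : ℕ+ → A) (a : A) : translate d (C a) = Polynomial.C (C a) := by
  rw [translate, aeval_C]
  rfl

theorem umbral_apply (G : ℕ → SymFn A) (p : Polynomial (SymFn A)) :
    umbral G p = p.sum fun n a => a * G n := rfl

theorem umbral_monomial (G : ℕ → SymFn A) (n : ℕ) (a : SymFn A) :
    umbral G (Polynomial.monomial n a) = a * G n := by
  rw [umbral_apply, Polynomial.sum_monomial_index a _ (zero_mul _)]

theorem umbral_C (G : ℕ → SymFn A) (a : SymFn A) : umbral G (Polynomial.C a) = a * G 0 :=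
  umbral_monomial G 0 a

theorem umbral_C_mul (G : ℕ → SymFn A) (a : SymFn A) (p : Polynomial (SymFn A)) :
    umbral G (Polynomial.C a * p) = a * umbral G p := by
  rw [← Polynomial.smul_eq_C_mul, map_smul, smul_eq_mul]

variable {B : Type} [CommRing B] (φ : A →+* B)

theorem map_translate (d : ℕ+ → A) (f : SymFn A) :
    (translate d f).map (MvPolynomial.map φ) =
      translate (fun k => φ (d k)) (MvPolynomial.map φ f) := by
  induction f using MvPolynomial.induction_on with
  | C a => rw [translate_C, map_C, translate_C, Polynomial.map_C, map_C]
  | add p q hp hq => simp only [map_add, Polynomial.map_add, hp, hq]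
  | mul_X p k hp =>
    simp only [map_mul, Polynomial.map_mul, hp, map_X, translate_X, Polynomial.map_add,
      Polynomial.map_C, map_C, Polynomial.map_pow, Polynomial.map_X]

theorem map_umbral (G : ℕ → SymFn A) (p : Polynomial (SymFn A)) :
    MvPolynomial.map φ (umbral G p) =
      umbral (fun n => MvPolynomial.map φ (G n)) (p.map (MvPolynomial.map φ)) := by
  induction p using Polynomial.induction_on' with
  | add p q hp hq => simp only [map_add, Polynomial.map_add, hp, hq]
  | monomial n a => rw [umbral_monomial, Polynomial.map_monomial, umbral_monomial, map_mul]

theorem map_vertexOp (u : A) (G : ℕ → SymFn A) (f : SymFn A) :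
    MvPolynomial.map φ (vertexOp u G f) =
      vertexOp (φ u) (fun n => MvPolynomial.map φ (G n)) (MvPolynomial.map φ f) := by
  rw [vertexOp_apply, vertexOp_apply, map_umbral, map_translate]
  simp only [map_sub, map_one, map_pow]

end VertexOperator

section Translate

variable {R : Type} [Field R]

theorem hInt_of_neg {z : ℤ} (h : z < 0) : hInt (R := R) z = 0 := if_neg (not_le.2 h)

theorem hInt_natCast (n : ℕ) : hInt (R := R) n = hsym n := by
  rw [hInt, if_pos n.cast_nonneg, Int.toNat_natCast]

theorem translate_zero (f : SymFn R) : translate (fun _ => 0) f = Polynomial.C f := by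
  induction f using MvPolynomial.induction_on with
  | C a => exact translate_C _ a
  | add p q hp hq => rw [map_add, map_add, hp, hq]
  | mul_X p k hp => rw [map_mul, map_mul, hp, translate_X, C_0, map_zero, zero_mul, add_zero]

/-- The functions `h_N[(q - 1) X]`. -/
def gSym (q : R) (N : ℕ) : SymFn R := scaleHom (fun k => q ^ (k : ℕ) - 1) (hsym N)

theorem gSym_zero (q : R) : gSym q 0 = 1 := by rw [gSym, hsym_zero, map_one]

variable [CharZero R]

theorem one_sub_mul_translate_hSeries (u : R) :
    (1 - PowerSeries.C (Polynomial.C (C u) * Polynomial.X) * PowerSeries.X) *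
        PowerSeries.map (translate fun _ => (1 : R)).toRingHom (hSeries R) =
      PowerSeries.map (translate fun k => 1 - u ^ (k : ℕ)).toRingHom (hSeries R) := by
  refine HasLogDeriv.unique
    ((HasLogDeriv.one_sub_C_mul_X _).mul (hasLogDeriv_hSeries.map _)) ?_
  convert hasLogDeriv_hSeries.map (translate fun k => 1 - u ^ (k : ℕ)).toRingHom using 1
  ext1 n
  simp only [pSeries, map_add, map_neg, PowerSeries.coeff_map, PowerSeries.coeff_mk,
    AlgHom.toRingHom_eq_coe, RingHom.coe_coe, translate_X, Nat.succPNat_coe, Nat.succ_eq_add_one,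
    map_sub, map_one, map_pow]
  ring

theorem translate_hInt (u : R) (z : ℤ) :
    translate (fun k => 1 - u ^ (k : ℕ)) (hInt z) = translate (fun _ => 1) (hInt z) -
      Polynomial.C (C u) * (Polynomial.X * translate (fun _ => 1) (hInt (z - 1))) := by
  rcases lt_or_ge z 0 with hz | hz
  · rw [hInt_of_neg hz, hInt_of_neg (by omega)]
    simp only [map_zero, mul_zero, sub_zero]
  obtain ⟨n, rfl⟩ := Int.eq_ofNat_of_zero_le hz
  have h := congrArg (PowerSeries.coeff n) (one_sub_mul_translate_hSeries u)
  rw [sub_mul, one_mul, map_sub, mul_assoc, PowerSeries.coeff_C_mul, hSeries] at h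
  rcases n with _ | n
  · rw [hInt_of_neg (z := ((0 : ℕ) : ℤ) - 1) (by simp), hInt_natCast]
    simpa using h.symm
  · rw [show ((n + 1 : ℕ) : ℤ) - 1 = n by simp, hInt_natCast, hInt_natCast]
    simpa [PowerSeries.coeff_succ_X_mul, mul_assoc] using h.symm

theorem translate_one_hInt (z : ℤ) : translate (fun _ => 1) (hInt (R := R) z) =
    Polynomial.C (hInt z) + Polynomial.X * translate (fun _ => 1) (hInt (z - 1)) := by
  have h := translate_hInt (1 : R) z
  simp only [one_pow, sub_self, translate_zero, map_one, one_mul] at h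
  rw [h, sub_add_cancel]

theorem coeff_translate_one_hInt (z : ℤ) (k : ℕ) :
    (translate (fun _ => 1) (hInt (R := R) z)).coeff k = hInt (z - k) := by
  induction k generalizing z with
  | zero => rw [translate_one_hInt]; simp
  | succ k ih =>
    rw [translate_one_hInt, Polynomial.coeff_add, Polynomial.coeff_C_succ, zero_add,
      Polynomial.coeff_X_mul, ih]
    congr 1
    push_cast
    ring

theorem translate_one_hInt_add (z : ℤ) (r : ℕ) :
    translate (fun _ => 1) (hInt (R := R) (z + r)) =
      Polynomial.X ^ (r + 1) * translate (fun _ => 1) (hInt (z - 1)) +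
        ∑ s ∈ Finset.range (r + 1), Polynomial.X ^ (r - s) * Polynomial.C (hInt (z + s)) := by
  induction r with
  | zero => rw [Nat.cast_zero, add_zero, translate_one_hInt]; simp [add_comm]
  | succ r ih =>
    rw [translate_one_hInt, show z + ((r + 1 : ℕ) : ℤ) - 1 = z + r by push_cast; ring, ih,
      Finset.sum_range_succ _ (r + 1), mul_add, Finset.mul_sum]
    have hs : ∀ s ∈ Finset.range (r + 1),
        Polynomial.X * (Polynomial.X ^ (r - s) * Polynomial.C (hInt (R := R) (z + s))) =
          Polynomial.X ^ (r + 1 - s) * Polynomial.C (hInt (z + s)) := fun s hs => by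
      rw [Nat.succ_sub (Nat.le_of_lt_succ (Finset.mem_range.1 hs)), pow_succ', mul_assoc]
    rw [Finset.sum_congr rfl hs, Nat.sub_self, pow_zero, one_mul]
    ring

theorem map_gSym {R' : Type} [Field R'] [CharZero R'] (f : R →+* R') (q : R) (n : ℕ) :
    MvPolynomial.map f (gSym q n) = gSym (f q) n := by
  simp only [gSym, map_scaleHom, map_hsym, map_sub, map_pow, map_one]

theorem umbral_gSym_translate_hInt (q : R) (z : ℤ) :
    umbral (gSym q) (translate (fun _ => 1) (hInt z)) = C (q ^ z.toNat) * hInt z := by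
  rcases lt_or_ge z 0 with hz | hz
  · rw [hInt_of_neg hz, map_zero, map_zero, mul_zero]
  obtain ⟨n, rfl⟩ := Int.eq_ofNat_of_zero_le hz
  have hdeg : (translate (fun _ => 1) (hInt (R := R) n)).natDegree < n + 1 := by
    refine Nat.lt_succ_of_le (Polynomial.natDegree_le_iff_coeff_eq_zero.2 fun k hk => ?_)
    rw [coeff_translate_one_hInt, hInt_of_neg (by omega)]
  have h := congrArg (PowerSeries.coeff n) (scaleHom_hSeries_mul_hSeries q)
  rw [PowerSeries.coeff_mul, PowerSeries.coeff_rescale,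
    Finset.Nat.sum_antidiagonal_eq_sum_range_succ_mk] at h
  simp only [hSeries, PowerSeries.coeff_map, PowerSeries.coeff_mk] at h
  rw [umbral_apply, Polynomial.sum_over_range' _ (fun k => zero_mul (gSym q k)) _ hdeg,
    Int.toNat_natCast, hInt_natCast, map_pow, ← h]
  refine Finset.sum_congr rfl fun k hk => ?_
  have hk := Finset.mem_range.1 hk
  rw [← hInt_natCast, coeff_translate_one_hInt, mul_comm, ← Nat.cast_sub (by omega), hInt_natCast]
  rfl

end Translate

/-! ### The action on Jacobi–Trudi determinants -/

section RankOne

variable {S : Type*} [CommRing S] {n : Type*} [Fintype n] [DecidableEq n]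

open Matrix

theorem cramer_add_vecMulVec (M : Matrix n n S) (w v : n → S) :
    cramer (M + vecMulVec w v) w = cramer M w := by
  ext r
  rw [cramer_apply, cramer_apply, ← det_transpose, ← det_transpose (M.updateCol r w)]
  refine det_eq_of_forall_row_eq_smul_add_const (fun j => if j = r then 0 else v j) r (if_pos rfl)
    fun i j => ?_
  by_cases hi : i = r
  · simp [hi]
  · simp [hi, vecMulVec_apply, mul_comm]

theorem det_add_vecMulVec (M : Matrix n n S) (w v : n → S) :
    (M + vecMulVec w v).det = M.det + v ⬝ᵥ cramer M w := by
  induction v using Pi.single_induction generalizing M with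
  | zero => simp
  | add v v' hv hv' =>
    rw [vecMulVec_add, ← add_assoc, hv', hv, cramer_add_vecMulVec, add_dotProduct, add_assoc]
  | single a x =>
    have hcol : M + vecMulVec w (Pi.single a x) = M.updateCol a ((fun i => M i a) + x • w) := by
      ext i j
      rcases eq_or_ne j a with rfl | hj
      · simp [vecMulVec_apply, mul_comm]
      · simp [vecMulVec_apply, hj]
    rw [hcol, det_updateCol_add, det_updateCol_smul, updateCol_eq_self, single_dotProduct,
      cramer_apply]

theorem map_cramer_C (L : Polynomial S →ₗ[S] S) (M : Matrix n n S) (w : n → Polynomial S)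
    (r : n) : L (cramer (M.map Polynomial.C) w r) = cramer M (fun i => L (w i)) r := by
  have hadj : (M.map Polynomial.C).adjugate = M.adjugate.map Polynomial.C :=
    (RingHom.map_adjugate Polynomial.C M).symm
  simp only [cramer_eq_adjugate_mulVec, hadj, mulVec, dotProduct, map_apply, map_sum,
    ← Polynomial.smul_eq_C_mul, map_smul, smul_eq_mul]

end RankOne

section JacobiTrudi

open Matrix

variable {R : Type} [Field R] {n : ℕ}

/-- The Jacobi–Trudi matrix `(h_{m_i + j})` with row offsets `m`. -/
def jacobiTrudi (R : Type) [Field R] (m : Fin n → ℤ) : Matrix (Fin n) (Fin n) (SymFn R) :=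
  of fun i j => hInt (m i + j)

variable [CharZero R]

theorem translate_det_jacobiTrudi (u : R) (m : Fin n → ℤ) :
    translate (fun k => 1 - u ^ (k : ℕ)) (jacobiTrudi R m).det =
      ((jacobiTrudi R m).map Polynomial.C +
        vecMulVec (fun i => translate (fun _ => 1) (hInt (R := R) (m i - 1))) fun r : Fin n =>
          Polynomial.C (C ((1 - u) * u ^ (r : ℕ))) * Polynomial.X ^ ((r : ℕ) + 1)).det := by
  rcases n with _ | n
  · simp
  have hcast (i : Fin (n + 1)) (j : Fin n) : m i + (j.succ : ℕ) - 1 = m i + (j.castSucc : ℕ) := by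
    rw [Fin.val_succ, Fin.val_castSucc]
    push_cast
    ring
  let B : Matrix (Fin (n + 1)) (Fin (n + 1)) (Polynomial (SymFn R)) := of fun i => Fin.cons
    (translate (fun k => 1 - u ^ (k : ℕ)) (hInt (m i))) fun j =>
      Polynomial.C (hInt (m i + (j.succ : ℕ))) -
        Polynomial.C (C u) * (Polynomial.X * Polynomial.C (hInt (m i + (j.castSucc : ℕ))))
  -- Both determinants have `B` as a common column reduction.
  trans B.det
  · rw [AlgHom.map_det]
    refine det_eq_of_forall_col_eq_smul_add_pred (fun _ => Polynomial.X) (fun i => ?_)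
      fun i j => ?_
    · simp [B, jacobiTrudi]
    · simp only [AlgHom.mapMatrix_apply, map_apply, jacobiTrudi, of_apply, B, Fin.cons_succ,
        translate_hInt]
      rw [translate_one_hInt (m i + (j.succ : ℕ)), hcast,
        translate_one_hInt (m i + (j.castSucc : ℕ))]
      ring
  · symm
    refine det_eq_of_forall_col_eq_smul_add_pred (fun _ => Polynomial.C (C u) * Polynomial.X)
      (fun i => ?_) fun i j => ?_
    · simp only [Matrix.add_apply, map_apply, jacobiTrudi, of_apply, vecMulVec_apply, B,
        Fin.cons_zero, translate_hInt, Fin.val_zero, Nat.cast_zero, add_zero]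
      rw [translate_one_hInt (m i)]
      simp only [pow_zero, mul_one, zero_add, pow_one, map_sub, map_one]
      ring
    · simp only [Matrix.add_apply, map_apply, jacobiTrudi, of_apply, vecMulVec_apply, B,
        Fin.cons_succ, Fin.val_succ, Fin.val_castSucc, map_mul, map_pow]
      ring

theorem cramer_jacobiTrudi_translate (m : Fin n → ℤ) (r : Fin n) :
    cramer ((jacobiTrudi R m).map Polynomial.C)
        (fun i => translate (fun _ => 1) (hInt (R := R) (m i + (r : ℕ)))) r =
      Polynomial.X ^ ((r : ℕ) + 1) * cramer ((jacobiTrudi R m).map Polynomial.C)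
        (fun i => translate (fun _ => 1) (hInt (R := R) (m i - 1))) r +
      Polynomial.C (jacobiTrudi R m).det := by
  have hw : (fun i => translate (fun _ => 1) (hInt (R := R) (m i + (r : ℕ)))) =
      ((Polynomial.X : Polynomial (SymFn R)) ^ ((r : ℕ) + 1) •
        fun i => translate (fun _ => 1) (hInt (R := R) (m i - 1))) +
      fun i => ∑ s : Fin n, (if s ≤ r then (Polynomial.X : Polynomial (SymFn R)) ^ ((r : ℕ) - s)
        else 0) •
        (jacobiTrudi R m).map Polynomial.C i s := by
    ext1 i
    have hsum := Fin.sum_univ_eq_sum_range (fun s => (if s ≤ (r : ℕ) then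
      (Polynomial.X : Polynomial (SymFn R)) ^ ((r : ℕ) - s) else 0) *
        Polynomial.C (hInt (m i + s))) n
    rw [Pi.add_apply, Pi.smul_apply, smul_eq_mul, translate_one_hInt_add]
    refine congrArg (_ + ·) (Eq.trans ?_ hsum.symm)
    refine (Finset.sum_congr rfl fun s hs => ?_).trans (Finset.sum_subset
      (Finset.range_subset_range.2 r.2) fun s _ hs => ?_)
    · rw [if_pos (Nat.le_of_lt_succ (Finset.mem_range.1 hs))]
    · rw [if_neg fun h => hs (Finset.mem_range.2 (Nat.lt_succ_of_le h)), zero_mul]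
  rw [hw, map_add, map_smul, Pi.add_apply, Pi.smul_apply, smul_eq_mul, cramer_apply _ _ r,
    cramer_apply _ _ r, det_updateCol_sum, if_pos le_rfl, Nat.sub_self, pow_zero, one_smul]
  congr 1
  exact (RingHom.map_det Polynomial.C _).symm

theorem vertexOp_det_jacobiTrudi (q u : R) (m : Fin n → ℤ) :
    vertexOp u (gSym q) (jacobiTrudi R m).det = (jacobiTrudi R m).det +
      ∑ r : Fin n, C ((1 - u) * u ^ (r : ℕ)) * cramer (jacobiTrudi R m)
        (fun i => C (q ^ (m i + r).toNat - 1) * hInt (m i + r)) r := by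
  have hdet : ((jacobiTrudi R m).map Polynomial.C).det = Polynomial.C (jacobiTrudi R m).det :=
    (RingHom.map_det Polynomial.C _).symm
  rw [vertexOp_apply, translate_det_jacobiTrudi, det_add_vecMulVec, map_add, hdet, umbral_C,
    gSym_zero, mul_one, dotProduct, map_sum]
  refine congrArg _ (Finset.sum_congr rfl fun r _ => ?_)
  rw [mul_assoc, umbral_C_mul, eq_sub_of_add_eq (cramer_jacobiTrudi_translate m r).symm, map_sub,
    umbral_C, gSym_zero, mul_one, map_cramer_C]
  have hcol : cramer (jacobiTrudi R m) (fun i => hInt (m i + (r : ℕ))) r =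
      (jacobiTrudi R m).det :=
    (congrFun (cramer_row_self (jacobiTrudi R m) _ r fun _ => rfl) r).trans
      (Pi.single_eq_same _ _)
  rw [← hcol, ← Pi.sub_apply, ← map_sub]
  simp only [umbral_gSym_translate_hInt]
  congr 3
  rw [Pi.sub_def]
  simp only [map_sub C, C_1, sub_mul, one_mul]

end JacobiTrudi

/-! ### A total order on partitions -/

section Order

theorem wt_zero : wt 0 = 0 := rfl

theorem wt_add (a b : Multiset ℕ+) : wt (a + b) = wt a + wt b := by
  rw [wt, Multiset.map_add, Multiset.sum_add, wt, wt]

theorem wt_sum {ι : Type*} (s : Finset ι) (a : ι → Multiset ℕ+) :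
    wt (∑ i ∈ s, a i) = ∑ i ∈ s, wt (a i) :=
  map_sum (⟨⟨wt, wt_zero⟩, wt_add⟩ : Multiset ℕ+ →+ ℕ) a s

theorem finite_setOf_wt_eq (n : ℕ) : {lam | wt lam = n}.Finite := by
  refine ((Set.finite_range (Nat.Partition.parts (n := n))).preimage
    (Multiset.map_injective PNat.coe_injective).injOn).subset fun lam hlam => ?_
  refine ⟨⟨lam.map fun a : ℕ+ => (a : ℕ), fun {i} hi => ?_, hlam⟩, rfl⟩
  obtain ⟨a, _, rfl⟩ := Multiset.mem_map.1 hi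
  exact a.pos

/-- The sort key of a partition for the total order in which smaller weights come last, and
partitions of the same weight are compared by their multiplicities from the largest part down.
This order refines dominance, is additive, and has finite upper sets. -/
def key : Multiset ℕ+ →+ Lex (ℕᵒᵈ × Colex (ℕ+ →₀ ℕ)) where
  toFun lam := toLex (OrderDual.toDual (wt lam), toColex (Multiset.toFinsupp lam))
  map_zero' := by rw [wt_zero, map_zero Multiset.toFinsupp]; rfl
  map_add' a b := by rw [wt_add, map_add Multiset.toFinsupp]; rfl

theorem key_injective : Function.Injective key := fun a b h => by
  have h2 : (ofLex (key a)).2 = (ofLex (key b)).2 := by rw [h]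
  exact Multiset.toFinsupp.injective (toColex.injective h2)

theorem key_lt_key_iff {a b : Multiset ℕ+} : key a < key b ↔
    wt b < wt a ∨ wt a = wt b ∧ toColex (Multiset.toFinsupp a) < toColex (Multiset.toFinsupp b) :=
  Prod.Lex.toLex_lt_toLex

theorem wt_le_of_key_le {a b : Multiset ℕ+} (h : key a ≤ key b) : wt b ≤ wt a := by
  rcases h.lt_or_eq with h | h
  · rcases key_lt_key_iff.1 h with h | h
    · exact h.le
    · exact h.1.ge
  · rw [key_injective h]

theorem finite_setOf_key_le (lam : Multiset ℕ+) : {mu | key lam ≤ key mu}.Finite :=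
  ((Set.finite_Iic (wt lam)).biUnion fun n _ => finite_setOf_wt_eq n).subset
    fun _ hmu => Set.mem_biUnion (wt_le_of_key_le hmu) rfl

theorem key_induction {p : Multiset ℕ+ → Prop}
    (ind : ∀ lam, (∀ mu, key lam < key mu → p mu) → p lam) (lam : Multiset ℕ+) : p lam := by
  by_contra hlam
  obtain ⟨mu, ⟨hmu, hpmu⟩, hmax⟩ := Set.exists_max_image {mu | key lam ≤ key mu ∧ ¬p mu} key
    ((finite_setOf_key_le lam).subset fun _ h => h.1) ⟨lam, le_rfl, hlam⟩
  exact hpmu (ind mu fun ka hka => by_contra fun hpka =>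
    (hmax ka ⟨hmu.trans hka.le, hpka⟩).not_gt hka)

theorem colex_lt_of_mem {a b : Multiset ℕ+} {x : ℕ+} (hx : x ∈ b) (h : ∀ y ∈ a, y < x) :
    toColex (Multiset.toFinsupp a) < toColex (Multiset.toFinsupp b) := by
  classical
  obtain ⟨m, hmb, hmax⟩ := b.toFinset.exists_max_image id ⟨x, Multiset.mem_toFinset.2 hx⟩
  simp only [Multiset.mem_toFinset, id] at hmb hmax
  have ha {j : ℕ+} (hj : m ≤ j) : a.count j = 0 :=
    Multiset.count_eq_zero_of_notMem fun hja => (h j hja).not_ge ((hmax x hx).trans hj)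
  refine Finsupp.Colex.lt_iff.2 ⟨m, fun j hj => ?_, ?_⟩
  · have hb : b.count j = 0 :=
      Multiset.count_eq_zero_of_notMem fun hjb => (hmax j hjb).not_gt hj
    simp [ha hj.le, hb]
  · simpa [ha le_rfl] using Multiset.count_pos.2 hmb

end Order

section Parts

/-- The multiset of parts with the single part `a`, or none if `a = 0`. -/
def ofPart (a : ℕ) : Multiset ℕ+ := if h : 0 < a then {a.toPNat h} else 0

/-- The part `λ_i`, counted from `0` and vanishing beyond the length. -/
def part (lam : Multiset ℕ+) (i : ℕ) : ℕ := (descParts lam).getD i 0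

theorem ofPart_coe (a : ℕ+) : ofPart a = {a} := dif_pos a.pos

theorem mem_ofPart {x : ℕ+} {a : ℕ} : x ∈ ofPart a ↔ (x : ℕ) = a := by
  unfold ofPart
  split_ifs with h
  · rw [Multiset.mem_singleton, ← PNat.coe_inj, Nat.toPNat, PNat.mk_coe]
  · simp only [Multiset.notMem_zero, false_iff]
    have := x.pos
    omega

theorem wt_ofPart (a : ℕ) : wt (ofPart a) = a := by
  unfold ofPart
  split_ifs with h
  · rw [wt, Multiset.map_singleton, Multiset.sum_singleton, Nat.toPNat, PNat.mk_coe]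
  · rw [wt_zero]
    omega

theorem colex_lt_of_first {n : ℕ} {a b : Fin n → ℕ} (i₀ : Fin n) (hlt : ∀ i < i₀, a i = b i)
    (hge : ∀ i, i₀ ≤ i → a i < b i₀) : toColex (Multiset.toFinsupp (∑ i, ofPart (a i))) <
      toColex (Multiset.toFinsupp (∑ i, ofPart (b i))) := by
  rw [← Finset.sum_filter_add_sum_filter_not _ (· < i₀) fun i => ofPart (a i),
    ← Finset.sum_filter_add_sum_filter_not _ (· < i₀) fun i => ofPart (b i),
    Finset.sum_congr rfl fun i hi => by rw [hlt i (Finset.mem_filter.1 hi).2],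
    map_add Multiset.toFinsupp, map_add Multiset.toFinsupp, toColex_add, toColex_add]
  refine add_lt_add_right (colex_lt_of_mem (x := (b i₀).toPNat (Nat.zero_lt_of_lt (hge i₀ le_rfl)))
    (Multiset.mem_sum.2 ⟨i₀, by simp, mem_ofPart.2 rfl⟩) fun y hy => ?_) _
  obtain ⟨i, hi, hyi⟩ := Multiset.mem_sum.1 hy
  refine PNat.coe_lt_coe _ _ |>.1 ?_
  rw [mem_ofPart.1 hyi]
  exact hge i (not_lt.1 (Finset.mem_filter.1 hi).2)

variable {lam mu : Multiset ℕ+}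

theorem coe_descParts (lam : Multiset ℕ+) :
    (descParts lam : Multiset ℕ) = lam.map (fun a : ℕ+ => (a : ℕ)) := by
  rw [descParts, Multiset.coe_reverse, Multiset.sort_eq]

theorem length_descParts (lam : Multiset ℕ+) : (descParts lam).length = Multiset.card lam := by
  rw [← Multiset.coe_card, coe_descParts, Multiset.card_map]

theorem part_antitone (lam : Multiset ℕ+) : Antitone (part lam) := fun i j hij => by
  unfold part
  by_cases hj : j < (descParts lam).length
  · rw [List.getD_eq_getElem _ _ hj, List.getD_eq_getElem _ _ (hij.trans_lt hj)]
    have hsorted : (descParts lam).Pairwise (· ≥ ·) :=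
      List.pairwise_reverse.2 (Multiset.pairwise_sort _ _)
    rcases hij.eq_or_lt with rfl | hij
    · rfl
    · exact List.pairwise_iff_getElem.1 hsorted i j _ hj hij
  · rw [List.getD_eq_default _ _ (not_lt.1 hj)]
    exact Nat.zero_le _

theorem sum_map_part {M : Type*} [AddCommMonoid M] (f : ℕ → M) (lam : Multiset ℕ+) :
    ∑ i : Fin (Multiset.card lam), f (part lam i) = (lam.map fun a : ℕ+ => f a).sum := by
  have h := Fin.sum_univ_fun_getElem (descParts lam) f
  rw [← Multiset.sum_coe, ← Multiset.map_coe, coe_descParts, Multiset.map_map] at h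
  rw [← Fin.sum_congr' _ (length_descParts lam), Function.comp_def] at *
  rw [← h]
  refine Finset.sum_congr rfl fun i _ => ?_
  rw [part, Fin.val_cast, List.getD_eq_getElem _ _ i.2]

theorem sum_ofPart_part (lam : Multiset ℕ+) :
    ∑ i : Fin (Multiset.card lam), ofPart (part lam i) = lam := by
  rw [sum_map_part]
  simp only [ofPart_coe, Multiset.sum_map_singleton]

theorem sum_part (lam : Multiset ℕ+) : ∑ i : Fin (Multiset.card lam), part lam i = wt lam :=
  sum_map_part (fun a => a) lam

theorem part_of_card_le {i : ℕ} (h : Multiset.card lam ≤ i) : part lam i = 0 :=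
  List.getD_eq_default _ _ ((length_descParts lam).trans_le h)

theorem sum_fin_ofPart_part {n : ℕ} (h : Multiset.card lam ≤ n) :
    ∑ i : Fin n, ofPart (part lam i) = lam := by
  conv_rhs => rw [← sum_ofPart_part lam]
  rw [Fin.sum_univ_eq_sum_range (fun i => ofPart (part lam i)),
    Fin.sum_univ_eq_sum_range (fun i => ofPart (part lam i))]
  refine (Finset.sum_subset (Finset.range_subset_range.2 h) fun i _ hi => ?_).symm
  rw [part_of_card_le (not_lt.1 fun hlt => hi (Finset.mem_range.2 hlt))]
  rfl

theorem pSum_eq_sum (lam : Multiset ℕ+) (k : ℕ) :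
    pSum lam k = ∑ i ∈ Finset.range k, part lam i := by
  induction k with
  | zero => rfl
  | succ k ih =>
    rw [Finset.sum_range_succ, ← ih, pSum, pSum, List.take_add_one, List.sum_append, part,
      List.getD_eq_getElem?_getD]
    cases (descParts lam)[k]? <;> simp

theorem key_lt_of_strictDom (h : StrictDom mu lam) : key mu < key lam := by
  obtain ⟨hne, hwt, hsum⟩ := h
  refine key_lt_key_iff.2 (.inr ⟨hwt, ?_⟩)
  obtain ⟨n, hn⟩ := exists_ge_ge (Multiset.card mu) (Multiset.card lam)
  have hmu := sum_fin_ofPart_part hn.1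
  have hlam := sum_fin_ofPart_part hn.2
  have hex : ∃ i, i < n ∧ part mu i ≠ part lam i := by
    by_contra! hall
    exact hne (hmu.symm.trans (.trans (Finset.sum_congr rfl fun i _ => by rw [hall i i.2]) hlam))
  classical
  obtain ⟨hin, hi⟩ := Nat.find_spec hex
  have hmin (j : ℕ) (hj : j < Nat.find hex) : part mu j = part lam j := by
    by_contra hj'
    exact Nat.find_min hex hj ⟨hj.trans hin, hj'⟩
  have hle := hsum (Nat.find hex + 1)
  rw [pSum_eq_sum, pSum_eq_sum, Finset.sum_range_succ, Finset.sum_range_succ,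
    Finset.sum_congr rfl fun j hj => hmin j (Finset.mem_range.1 hj), add_le_add_iff_left] at hle
  have hlt := colex_lt_of_first (a := fun i : Fin n => part mu i) (b := fun i => part lam i)
    ⟨_, hin⟩ (fun j hj => hmin j hj)
    fun j hj => (part_antitone mu hj).trans_lt (lt_of_le_of_ne hle hi)
  rwa [hmu, hlam] at hlt

end Parts

/-! ### Triangularity in the basis of complete symmetric functions -/

section Triangular

variable {R : Type} [Field R] {lam mu : Multiset ℕ+}

theorem hPar_zero : hPar (R := R) 0 = 1 := rfl

theorem hPar_eq_prod (lam : Multiset ℕ+) :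
    hPar (R := R) lam = (lam.map fun a : ℕ+ => hsym (a : ℕ)).prod := by
  simp [hPar]

theorem hPar_add (a b : Multiset ℕ+) : hPar (R := R) (a + b) = hPar a * hPar b := by
  simp only [hPar_eq_prod, Multiset.map_add, Multiset.prod_add]

theorem hPar_ofPart (a : ℕ) : hPar (R := R) (ofPart a) = hsym a := by
  rcases a.eq_zero_or_pos with rfl | ha
  · exact hsym_zero.symm
  · lift a to ℕ+ using ha
    rw [ofPart_coe, hPar_eq_prod, Multiset.map_singleton, Multiset.prod_singleton]

theorem hPar_sum_ofPart {ι : Type*} (s : Finset ι) (a : ι → ℕ) :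
    hPar (R := R) (∑ i ∈ s, ofPart (a i)) = ∏ i ∈ s, hsym (a i) := by
  classical
  induction s using Finset.induction_on with
  | empty => rfl
  | insert i s hi ih => rw [Finset.sum_insert hi, Finset.prod_insert hi, hPar_add, hPar_ofPart, ih]

/-- The span of the `h_κ` with `κ` after `λ` in the order of `key`. -/
def above (R : Type) [Field R] (lam : Multiset ℕ+) : Submodule R (SymFn R) :=
  Submodule.span R (hPar '' {ka | key lam < key ka})

theorem hPar_mem_above (h : key lam < key mu) : hPar mu ∈ above R lam :=
  Submodule.subset_span ⟨mu, h, rfl⟩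

theorem above_le_above (h : key lam ≤ key mu) : above R mu ≤ above R lam :=
  Submodule.span_mono (Set.image_mono fun _ hka => h.trans_lt hka)

section Map

variable {T : SymFn R →ₗ[R] SymFn R} {σ : Multiset ℕ+ → Multiset ℕ+} {E : Multiset ℕ+ → R}
  {f : SymFn R}

theorem map_mem_above (hσ : ∀ ⦃mu⦄, key lam < key mu → key (σ lam) < key (σ mu))
    (hT : ∀ mu, key lam < key mu → T (hPar mu) - E mu • hPar (σ mu) ∈ above R (σ mu))
    (hf : f ∈ above R lam) : T f ∈ above R (σ lam) := by
  refine (Submodule.span_le (p := (above R (σ lam)).comap T)).2 ?_ hf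
  rintro _ ⟨mu, hmu, rfl⟩
  rw [SetLike.mem_coe, Submodule.mem_comap, ← sub_add_cancel (T (hPar mu)) (E mu • hPar (σ mu))]
  exact add_mem (above_le_above (hσ hmu).le (hT mu hmu))
    (Submodule.smul_mem _ _ (hPar_mem_above (hσ hmu)))

theorem map_sub_smul_hPar_mem_above (hσ : ∀ ⦃mu⦄, key lam < key mu → key (σ lam) < key (σ mu))
    (hT : ∀ mu, T (hPar mu) - E mu • hPar (σ mu) ∈ above R (σ mu)) {c : R}
    (hf : f - c • hPar lam ∈ above R lam) :
    T f - (c * E lam) • hPar (σ lam) ∈ above R (σ lam) := by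
  have h := add_mem (map_mem_above hσ (fun mu _ => hT mu) hf)
    (Submodule.smul_mem _ c (hT lam))
  rwa [map_sub, map_smul, smul_sub, smul_smul, sub_add_sub_cancel] at h

end Map

theorem prod_hInt_part (lam : Multiset ℕ+) :
    ∏ i : Fin (Multiset.card lam), hInt (R := R) (part lam i) = hPar lam := by
  conv_rhs => rw [← sum_ofPart_part lam, hPar_sum_ofPart]
  simp only [hInt_natCast]

theorem prod_hInt_perm (lam : Multiset ℕ+) (σ : Equiv.Perm (Fin (Multiset.card lam))) :
    ∏ i : Fin _, hInt (R := R) (part lam i - (i : ℕ) + (σ i : ℕ)) = 0 ∨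
      ∃ ka, wt ka = wt lam ∧ (σ ≠ 1 → key lam < key ka) ∧
        ∏ i : Fin _, hInt (R := R) (part lam i - (i : ℕ) + (σ i : ℕ)) = hPar ka := by
  by_cases hneg : ∃ i : Fin _, (part lam i : ℤ) - (i : ℕ) + (σ i : ℕ) < 0
  · obtain ⟨i, hi⟩ := hneg
    exact .inl (Finset.prod_eq_zero (Finset.mem_univ i) (hInt_of_neg hi))
  push Not at hneg
  choose b hb using fun i => Int.eq_ofNat_of_zero_le (hneg i)
  have hwt : wt (∑ i, ofPart (b i)) = wt lam := by
    rw [wt_sum, ← sum_part lam]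
    simp only [wt_ofPart]
    zify
    simp only [← hb, Finset.sum_add_distrib, Finset.sum_sub_distrib]
    rw [Equiv.sum_comp σ fun i => ((i : ℕ) : ℤ), sub_add_cancel]
  refine .inr ⟨∑ i, ofPart (b i), hwt, fun hσ => key_lt_key_iff.2 (.inr ⟨hwt.symm, ?_⟩), ?_⟩
  · obtain ⟨i₀, hi₀, hmin⟩ := (Finset.univ.filter fun i => σ i ≠ i).exists_min_image id
      ((Finset.filter_nonempty_iff).2 (by simpa using fun h => hσ (Equiv.ext h)))
    simp only [Finset.mem_filter, Finset.mem_univ, true_and, id] at hi₀ hmin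
    have hfix {i} (hi : i < i₀) : σ i = i := by
      by_contra h
      exact (hmin i h).not_gt hi
    have hlt : i₀ < σ i₀ := lt_of_le_of_ne (not_lt.1 fun h => hi₀ (σ.injective (hfix h))) hi₀.symm
    have hcolex := colex_lt_of_first (a := fun i => part lam i) (b := b) i₀
      (fun i hi => by have := hb i; rw [hfix hi] at this; omega) fun i hi => by
        have h₀ := hb i₀
        have hanti := part_antitone lam (show (i₀ : ℕ) ≤ i from hi)
        have := Fin.lt_def.1 hlt
        omega
    rwa [sum_ofPart_part] at hcolex
  · rw [hPar_sum_ofPart]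
    simp only [hb, hInt_natCast]

theorem det_sub_mem_above (lam : Multiset ℕ+)
    (c : Matrix (Fin (Multiset.card lam)) (Fin (Multiset.card lam)) R) :
    (Matrix.of fun i j => C (c i j) *
      jacobiTrudi R (fun i => part lam i - (i : ℕ)) i j).det -
        (∏ i, c i i) • hPar lam ∈ above R lam := by
  rw [← Matrix.det_transpose, Matrix.det_apply, ← Finset.add_sum_erase _ _
    (Finset.mem_univ (1 : Equiv.Perm (Fin (Multiset.card lam))))]
  have hterm (σ : Equiv.Perm (Fin (Multiset.card lam))) :
      ∏ i, (Matrix.of fun i j => C (c i j) *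
        jacobiTrudi R (fun i => part lam i - (i : ℕ)) i j).transpose (σ i) i =
        (∏ i, c i (σ i)) • ∏ i : Fin _, hInt (part lam i - (i : ℕ) + (σ i : ℕ)) := by
    rw [smul_eq_C_mul, map_prod, ← Finset.prod_mul_distrib]
    rfl
  simp only [hterm]
  rw [Equiv.Perm.sign_one, one_smul]
  simp only [Equiv.Perm.one_apply]
  simp_rw [sub_add_cancel]
  rw [prod_hInt_part, add_sub_cancel_left]
  refine sum_mem fun σ hσ => ?_
  rw [Units.smul_def]
  refine zsmul_mem (Submodule.smul_mem _ _ ?_) _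
  rcases prod_hInt_perm (R := R) lam σ with h | ⟨ka, -, hka, h⟩
  · rw [h]
    exact zero_mem _
  · rw [h]
    exact hPar_mem_above (hka (Finset.ne_of_mem_erase hσ))

theorem schur_eq_det_jacobiTrudi {n : ℕ} (h : Multiset.card lam = n) :
    schur lam = (jacobiTrudi R fun i : Fin n => part lam i - (i : ℕ)).det := by
  subst h
  rw [schur]
  congr 1
  ext1 i j
  rw [jacobiTrudi, Matrix.of_apply, Matrix.of_apply, part, sub_add_eq_add_sub]

theorem schur_sub_hPar_mem_above (lam : Multiset ℕ+) : schur lam - hPar lam ∈ above R lam := by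
  have h := det_sub_mem_above (R := R) lam fun _ _ => 1
  simp only [C_1, one_mul, Finset.prod_const_one, one_smul] at h
  rwa [schur_eq_det_jacobiTrudi rfl]

/-- Macdonald's operator, normalized to kill constants. -/
def macdonaldOp (q u : R) : SymFn R →ₗ[R] SymFn R := vertexOp u (gSym q) - LinearMap.id

/-- The eigenvalue `(1 - u) ∑ u^i (q^{λ_i} - 1)` of `macdonaldOp q u` at `λ`. -/
def eigenvalue {A : Type} [CommRing A] (q u : A) (lam : Multiset ℕ+) : A :=
  ∑ i : Fin (Multiset.card lam), (1 - u) * u ^ (i : ℕ) * (q ^ part lam i - 1)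

variable [CharZero R]

theorem macdonaldOp_schur (q u : R) (lam : Multiset ℕ+) :
    macdonaldOp q u (schur lam) - eigenvalue q u lam • hPar lam ∈ above R lam := by
  rw [macdonaldOp, LinearMap.sub_apply, LinearMap.id_apply, schur_eq_det_jacobiTrudi rfl,
    vertexOp_det_jacobiTrudi, add_sub_cancel_left, eigenvalue, Finset.sum_smul,
    ← Finset.sum_sub_distrib]
  refine sum_mem fun r _ => ?_
  have h := det_sub_mem_above (R := R) lam fun i j =>
    if j = r then q ^ ((part lam i : ℤ) - (i : ℕ) + (r : ℕ)).toNat - 1 else 1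
  rw [Finset.prod_ite_eq' Finset.univ r, if_pos (Finset.mem_univ r), sub_add_cancel,
    Int.toNat_natCast] at h
  rw [mul_smul, ← smul_eq_C_mul, ← smul_sub, Matrix.cramer_apply]
  refine Submodule.smul_mem _ _ ?_
  convert h using 3
  ext1 i j
  rcases eq_or_ne j r with rfl | hj
  · simp [jacobiTrudi]
  · simp [hj]

theorem macdonaldOp_hPar (q u : R) (lam : Multiset ℕ+) :
    macdonaldOp q u (hPar lam) - eigenvalue q u lam • hPar lam ∈ above R lam := by
  induction lam using key_induction with
  | ind lam ih =>
    have h := sub_mem (macdonaldOp_schur q u lam)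
      (map_mem_above (σ := id) (fun _ h => h) ih (schur_sub_hPar_mem_above lam))
    rwa [map_sub, sub_sub_sub_comm, sub_self, zero_sub, neg_sub] at h

theorem macdonaldOp_mem_above (q u : R) {f : SymFn R} (hf : f ∈ above R lam) :
    macdonaldOp q u f ∈ above R lam :=
  map_mem_above (σ := id) (fun _ h => h) (fun mu _ => macdonaldOp_hPar q u mu) hf

theorem macdonaldOp_sub_smul_hPar_mem_above (q u : R) {f : SymFn R} {c : R}
    (hf : f - c • hPar lam ∈ above R lam) :
    macdonaldOp q u f - (c * eigenvalue q u lam) • hPar lam ∈ above R lam :=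
  map_sub_smul_hPar_mem_above (σ := id) (fun _ h => h) (macdonaldOp_hPar q u) hf

end Triangular

/-! ### The Hall form and the adjoint of multiplication -/

section Hall

variable {A : Type} [CommRing A]

/-- The weight `z_λ = ∏ m_k! k^{m_k}` of a monomial in the power sums, over any ring. -/
def hallWeight (A : Type) [CommRing A] (m : ℕ+ →₀ ℕ) : A :=
  m.prod fun k e => (e.factorial : A) * ((k : ℕ) : A) ^ e

/-- The Hall form, `⟨p_λ, p_μ⟩ = δ_{λμ} z_λ`, as a bilinear form over any ring. -/
def hall : SymFn A →ₗ[A] SymFn A →ₗ[A] A :=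
  (basisMonomials ℕ+ A).constr A fun m => hallWeight A m • lcoeff A m

theorem hall_monomial (m : ℕ+ →₀ ℕ) (a : A) (g : SymFn A) :
    hall (monomial m a) g = a * (hallWeight A m * coeff m g) := by
  have h : (monomial m a : SymFn A) = a • basisMonomials ℕ+ A m := by
    rw [coe_basisMonomials, smul_monomial, smul_eq_mul, mul_one]
  rw [h, map_smul, hall, Module.Basis.constr_basis]
  rfl

theorem hall_comm (f g : SymFn A) : hall f g = hall g f := by
  induction f using MvPolynomial.induction_on' with
  | add p q hp hq => rw [map_add, map_add, LinearMap.add_apply, hp, hq]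
  | monomial m a =>
    induction g using MvPolynomial.induction_on' with
    | add p q hp hq => rw [map_add, map_add, LinearMap.add_apply, hp, hq]
    | monomial n b =>
      rw [hall_monomial, hall_monomial, coeff_monomial, coeff_monomial]
      rcases eq_or_ne n m with rfl | h
      · rw [if_pos rfl, if_pos rfl]
        ring
      · rw [if_neg h, if_neg h.symm]
        ring

theorem hallWeight_add_single (m : ℕ+ →₀ ℕ) (k : ℕ+) :
    hallWeight A (m + Finsupp.single k 1) = hallWeight A m * ((k : ℕ) * ((m k : A) + 1)) := by
  rw [hallWeight, hallWeight, ← Finsupp.mul_prod_erase' (m + Finsupp.single k 1) k _ (by simp),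
    ← Finsupp.mul_prod_erase' m k _ (by simp), Finsupp.erase_add, Finsupp.erase_single, add_zero]
  simp only [Finsupp.add_apply, Finsupp.single_eq_same, Nat.factorial_succ, pow_succ]
  push_cast
  ring

theorem hall_X_mul (k : ℕ+) (f g : SymFn A) :
    hall (X k * f) g = (k : ℕ) * hall f (pderiv k g) := by
  induction f using MvPolynomial.induction_on' with
  | add p q hp hq => simp only [mul_add, map_add, LinearMap.add_apply, hp, hq]
  | monomial m a =>
    rw [mul_comm, X, monomial_mul, mul_one, hall_monomial, hall_monomial, hallWeight_add_single,
      coeff_pderiv]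
    ring

theorem map_hall {B : Type} [CommRing B] (φ : A →+* B) (f g : SymFn A) :
    φ (hall f g) = hall (MvPolynomial.map φ f) (MvPolynomial.map φ g) := by
  induction f using MvPolynomial.induction_on' with
  | add p q hp hq => simp only [map_add, LinearMap.add_apply, hp, hq]
  | monomial m a =>
    simp only [hall_monomial, map_monomial, map_mul, coeff_map, hallWeight, Finsupp.prod, map_prod,
      map_pow, map_natCast]

end Hall

section HallAdjoint

variable {R : Type} [Field R]

theorem scaleHom_monomial (c : ℕ+ → R) (m : ℕ+ →₀ ℕ) (a : R) :
    scaleHom c (monomial m a) = monomial m (a * m.prod fun k e => c k ^ e) := by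
  rw [scaleHom, aeval_monomial, MvPolynomial.algebraMap_eq, monomial_eq, map_mul]
  simp only [Finsupp.prod, mul_assoc, map_prod, ← Finset.prod_mul_distrib, mul_pow, map_pow]

theorem coeff_scaleHom (c : ℕ+ → R) (m : ℕ+ →₀ ℕ) (f : SymFn R) :
    coeff m (scaleHom c f) = coeff m f * m.prod fun k e => c k ^ e := by
  induction f using MvPolynomial.induction_on' with
  | add p q hp hq => rw [map_add, coeff_add, coeff_add, hp, hq, add_mul]
  | monomial n a =>
    rw [scaleHom_monomial, coeff_monomial, coeff_monomial, ite_mul, zero_mul]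
    exact if_ctx_congr Iff.rfl (fun h => by rw [h]) fun _ => rfl

theorem hall_scaleHom (c : ℕ+ → R) (f g : SymFn R) :
    hall (scaleHom c f) g = hall f (scaleHom c g) := by
  induction f using MvPolynomial.induction_on' with
  | add p q hp hq => simp only [map_add, LinearMap.add_apply, hp, hq]
  | monomial m a =>
    rw [scaleHom_monomial, hall_monomial, hall_monomial, coeff_scaleHom]
    ring

theorem pderiv_scaleHom (c : ℕ+ → R) (k : ℕ+) (f : SymFn R) :
    pderiv k (scaleHom c f) = C (c k) * scaleHom c (pderiv k f) := by
  induction f using MvPolynomial.induction_on with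
  | C a => simp [scaleHom]
  | add p q hp hq => simp only [map_add, hp, hq, mul_add]
  | mul_X p j hp =>
    have hX : scaleHom c (X j) = C (c j) * X j := aeval_X _ j
    rw [map_mul, Derivation.leibniz, hp, hX, Derivation.leibniz, pderiv_C, Derivation.leibniz,
      map_add, pderiv_X]
    rcases eq_or_ne j k with rfl | hjk
    · simp [hX]
      ring
    · simp [hX, hjk]
      ring

theorem constantCoeff_scaleHom (c : ℕ+ → R) (f : SymFn R) :
    constantCoeff (scaleHom c f) = constantCoeff f := by
  induction f using MvPolynomial.induction_on with
  | C a => simp [scaleHom]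
  | add p q hp hq => simp only [map_add, hp, hq]
  | mul_X p k => simp [scaleHom]

theorem constantCoeff_hsym (n : ℕ) :
    constantCoeff (hsym (R := R) n) = if n = 0 then 1 else 0 := by
  rcases n with _ | n
  · rw [hsym_zero, map_one, if_pos rfl]
  · rw [hsym, if_neg n.succ_ne_zero, constantCoeff_smul, map_sum, Finset.sum_eq_zero, smul_zero]
    intro i _
    exact (map_mul _ _ _).trans (mul_eq_zero_of_left (constantCoeff_X R i.succPNat) _)

theorem coeff_translate_scaleHom (d c : ℕ+ → R) (n : ℕ) (f : SymFn R) :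
    (translate d (scaleHom c f)).coeff n =
      scaleHom c ((translate (fun k => c k * d k) f).coeff n) := by
  suffices translate d (scaleHom c f) =
      (translate (fun k => c k * d k) f).map (scaleHom c).toRingHom by
    rw [this, Polynomial.coeff_map]
    rfl
  induction f using MvPolynomial.induction_on with
  | C a => simp [scaleHom]
  | add p q hp hq => simp only [map_add, Polynomial.map_add, hp, hq]
  | mul_X p k hp =>
    have hX : scaleHom c (X k) = C (c k) * X k := aeval_X _ k
    have hC (a : R) : scaleHom c (C a) = C a := aeval_C _ a
    rw [map_mul, map_mul, map_mul, Polynomial.map_mul, hp, translate_X, hX, map_mul, translate_X,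
      translate_C]
    congr 1
    simp only [Polynomial.map_add, Polynomial.map_mul, Polynomial.map_pow, Polynomial.map_C,
      Polynomial.map_X, AlgHom.toRingHom_eq_coe, RingHom.coe_coe, hX, hC, map_mul]
    ring

theorem coeff_translate_pow_mul (a : R) (d : ℕ+ → R) (n : ℕ) (f : SymFn R) :
    (translate (fun k => a ^ (k : ℕ) * d k) f).coeff n = C a ^ n * (translate d f).coeff n := by
  suffices translate (fun k => a ^ (k : ℕ) * d k) f =
      (translate d f).comp (Polynomial.C (C a) * Polynomial.X) by
    rw [this, Polynomial.comp_C_mul_X_coeff, mul_comm]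
  induction f using MvPolynomial.induction_on with
  | C a => simp
  | add p q hp hq => simp only [map_add, Polynomial.add_comp, hp, hq]
  | mul_X p k hp =>
    rw [map_mul, map_mul, Polynomial.mul_comp, hp, translate_X, translate_X]
    simp only [Polynomial.add_comp, Polynomial.mul_comp, Polynomial.C_comp, Polynomial.X_pow_comp,
      map_mul, map_pow]
    ring

/-- The substitution `f ↦ f[(1 - q) X / (1 - t)]` relating `Q'` to `Q`. -/
def qtHom (q t : R) : SymFn R →ₐ[R] SymFn R :=
  scaleHom fun k => (1 - q ^ (k : ℕ)) / (1 - t ^ (k : ℕ))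

theorem innerQT_eq_hall (q t : R) (f g : SymFn R) : innerQT q t f g = hall f (qtHom q t g) := by
  conv_rhs => rw [f.as_sum]
  rw [map_sum, LinearMap.sum_apply, innerQT]
  refine Finset.sum_congr rfl fun m _ => ?_
  have hz : zwtQT q t m = hallWeight R m *
      m.prod fun k e => ((1 - q ^ (k : ℕ)) / (1 - t ^ (k : ℕ))) ^ e := by
    rw [hallWeight, ← Finsupp.prod_mul]
    rfl
  rw [hall_monomial, qtHom, coeff_scaleHom, hz]
  ring

variable [CharZero R]

theorem hall_scaleHom_hsym_mul (c : ℕ+ → R) (n : ℕ) (f g : SymFn R) :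
    hall (scaleHom c (hsym n) * f) g = hall f ((translate c g).coeff n) := by
  induction g using MvPolynomial.induction_on generalizing n f with
  | C a =>
    rw [hall_comm, C_apply, hall_monomial, ← constantCoeff_eq, map_mul, constantCoeff_scaleHom,
      constantCoeff_hsym, ← C_apply, translate_C, Polynomial.coeff_C]
    split_ifs with hn
    · rw [hall_comm f, C_apply, hall_monomial, one_mul, constantCoeff_eq]
    · rw [zero_mul, mul_zero, mul_zero, map_zero]
  | add p q hp hq => simp only [map_add, Polynomial.coeff_add, hp, hq]
  | mul_X g k ih =>
    have hpd : ((k : ℕ) : SymFn R) * pderiv k (scaleHom c (hsym n)) =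
        C (c k) * if (k : ℕ) ≤ n then scaleHom c (hsym (n - k)) else 0 := by
      rw [pderiv_scaleHom, mul_left_comm, ← map_natCast (scaleHom c), ← map_mul,
        natCast_mul_pderiv_hsym]
      split_ifs <;> simp
    have hnat (x y : SymFn R) : ((k : ℕ) : R) * hall x y = hall (((k : ℕ) : SymFn R) * x) y := by
      rw [← map_natCast C, ← smul_eq_C_mul, map_smul, LinearMap.smul_apply, smul_eq_mul]
    calc hall (scaleHom c (hsym n) * f) (g * X k)
      _ = hall (scaleHom c (hsym n) * (((k : ℕ) : SymFn R) * pderiv k f)) g +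
            c k * hall (if (k : ℕ) ≤ n then scaleHom c (hsym (n - k)) * f else 0) g := by
        rw [hall_comm, mul_comm g, hall_X_mul, hall_comm, hnat, Derivation.leibniz, smul_eq_mul,
          smul_eq_mul, mul_add, mul_left_comm, mul_left_comm _ f, hpd, map_add,
          LinearMap.add_apply, mul_left_comm f, ← smul_eq_C_mul, map_smul, LinearMap.smul_apply,
          smul_eq_mul, mul_ite, mul_zero, mul_comm f]
      _ = hall f ((translate c g).coeff n * X k) +
            c k * hall f (if (k : ℕ) ≤ n then (translate c g).coeff (n - k) else 0) := by
        rw [ih, ← hnat, hall_comm f, mul_comm _ (X k), hall_X_mul, hall_comm _ (pderiv k f)]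
        split_ifs
        · rw [ih]
        · simp
      _ = hall f ((translate c (g * X k)).coeff n) := by
        rw [map_mul (translate c), translate_X, mul_add, Polynomial.coeff_add,
          Polynomial.coeff_mul_C, mul_left_comm,
          Polynomial.coeff_C_mul, Polynomial.coeff_mul_X_pow', ← smul_eq_C_mul,
          (hall f).map_add, (hall f).map_smul, smul_eq_mul]

theorem hall_umbral_gSym (q : R) (p : Polynomial (SymFn R)) (g : SymFn R) :
    hall (umbral (gSym q) p) g =
      p.sum fun n a => hall a ((translate (fun k => q ^ (k : ℕ) - 1) g).coeff n) := by
  rw [umbral_apply, Polynomial.sum, map_sum, LinearMap.sum_apply]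
  exact Finset.sum_congr rfl fun n _ => by rw [mul_comm, gSym, hall_scaleHom_hsym_mul]

theorem hall_vertexOp_qtHom {q t : R} (hq : q ≠ 0) (ht : ∀ k : ℕ+, t ^ (k : ℕ) ≠ 1)
    (f g : SymFn R) {s : Finset ℕ}
    (hs : (translate (fun k => q⁻¹ ^ (k : ℕ) - 1) f).support ⊆ s) :
    hall (vertexOp t (gSym q⁻¹) (qtHom q t f)) g = ∑ n ∈ s, q ^ n *
      hall ((translate (fun k => q⁻¹ ^ (k : ℕ) - 1) f).coeff n)
        (qtHom q t ((translate (fun k => q⁻¹ ^ (k : ℕ) - 1) g).coeff n)) := by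
  have hcoeff (n : ℕ) : (translate (fun k => 1 - t ^ (k : ℕ)) (qtHom q t f)).coeff n =
      C q ^ n * qtHom q t ((translate (fun k => q⁻¹ ^ (k : ℕ) - 1) f).coeff n) := by
    have hd (k : ℕ+) : (1 - q ^ (k : ℕ)) / (1 - t ^ (k : ℕ)) * (1 - t ^ (k : ℕ)) =
        q ^ (k : ℕ) * (q⁻¹ ^ (k : ℕ) - 1) := by
      rw [div_mul_cancel₀ _ (sub_ne_zero.2 (ht k).symm), mul_sub, mul_one, ← mul_pow,
        mul_inv_cancel₀ hq, one_pow]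
    rw [qtHom, coeff_translate_scaleHom, funext hd, coeff_translate_pow_mul, map_mul, map_pow]
    congr 2
    exact aeval_C _ q
  rw [vertexOp_apply, hall_umbral_gSym, Polynomial.sum_eq_of_subset _ (by simp) (s := s)]
  · refine Finset.sum_congr rfl fun n _ => ?_
    rw [hcoeff, ← map_pow, ← smul_eq_C_mul, map_smul, LinearMap.smul_apply, smul_eq_mul, qtHom,
      hall_scaleHom]
  · refine fun n hn => hs ?_
    rw [Polynomial.mem_support_iff, hcoeff] at hn
    rw [Polynomial.mem_support_iff]
    rintro h
    rw [h, map_zero, mul_zero] at hn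
    exact hn rfl

theorem hall_macdonaldOp_qtHom {q t : R} (hq : q ≠ 0) (ht : ∀ k : ℕ+, t ^ (k : ℕ) ≠ 1)
    (f g : SymFn R) :
    hall (macdonaldOp q⁻¹ t (qtHom q t f)) g = hall (macdonaldOp q⁻¹ t (qtHom q t g)) f := by
  rw [macdonaldOp, LinearMap.sub_apply, LinearMap.sub_apply, map_sub, map_sub,
    LinearMap.sub_apply, LinearMap.sub_apply, LinearMap.id_apply, LinearMap.id_apply,
    hall_vertexOp_qtHom hq ht f g Finset.subset_union_left,
    hall_vertexOp_qtHom hq ht g f Finset.subset_union_right]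
  refine congrArg₂ _ (Finset.sum_congr rfl fun n _ => ?_) ?_
  · rw [hall_comm _ (qtHom q t _), qtHom, hall_scaleHom]
  · rw [hall_comm, qtHom, ← hall_scaleHom]

end HallAdjoint

/-! ### Duality of complete symmetric functions and Schur functions -/

section Degree

variable {R : Type} [Field R]

/-- Homogeneity of a given degree in the underlying variables, in which `p_k` has degree `k`. -/
abbrev HasDegree {A : Type} [CommRing A] (f : SymFn A) (n : ℕ) : Prop :=
  IsWeightedHomogeneous (fun k : ℕ+ => (k : ℕ)) f n

theorem hasDegree_hsym (n : ℕ) : HasDegree (hsym (R := R) n) n := by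
  induction n using Nat.strong_induction_on with
  | _ n ih =>
    rcases n with _ | n
    · rw [hsym_zero]
      exact isWeightedHomogeneous_one R _
    · rw [hsym]
      refine Submodule.smul_mem (weightedHomogeneousSubmodule R _ _) _ (Submodule.sum_mem _ ?_)
      intro i hi
      have hin := Finset.mem_range.1 hi
      have hdeg : n + 1 = (i.succPNat : ℕ) + (n - i) := by
        rw [Nat.succPNat_coe]
        omega
      rw [hdeg]
      exact (isWeightedHomogeneous_X R _ i.succPNat).mul (ih (n - i) (by omega))

theorem hasDegree_hPar (lam : Multiset ℕ+) : HasDegree (hPar (R := R) lam) (wt lam) := by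
  induction lam using Multiset.induction_on with
  | empty => exact isWeightedHomogeneous_one R _
  | cons a lam ih =>
    rw [← Multiset.singleton_add, hPar_add, wt_add, ← ofPart_coe, hPar_ofPart, wt_ofPart]
    exact (hasDegree_hsym _).mul ih

theorem hasDegree_schur (lam : Multiset ℕ+) : HasDegree (schur (R := R) lam) (wt lam) := by
  rw [schur_eq_det_jacobiTrudi rfl, ← Matrix.det_transpose, Matrix.det_apply]
  refine Submodule.sum_mem (weightedHomogeneousSubmodule R _ _) fun σ _ => ?_
  rw [Units.smul_def]
  refine zsmul_mem ?_ _
  rcases prod_hInt_perm (R := R) lam σ with h | ⟨ka, hwt, -, h⟩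
  · exact h.symm ▸ Submodule.zero_mem _
  · exact h.symm ▸ hwt ▸ hasDegree_hPar ka

theorem hall_eq_zero_of_degree_ne {A : Type} [CommRing A] {f g : SymFn A} {m n : ℕ}
    (hf : HasDegree f m) (hg : HasDegree g n) (h : m ≠ n) : hall f g = 0 := by
  rw [f.as_sum, map_sum, LinearMap.sum_apply]
  refine Finset.sum_eq_zero fun d hd => ?_
  have hdm := hf (mem_support_iff.1 hd)
  rw [hall_monomial, hg.coeff_eq_zero d (hdm.trans_ne h), mul_zero, mul_zero]

end Degree

section Kostka

variable {R : Type} [Field R]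

theorem part_max_cons {b : ℕ+} {mu : Multiset ℕ+} (hb : ∀ x ∈ mu, x ≤ b) :
    part (b ::ₘ mu) 0 = b ∧ ∀ i, part (b ::ₘ mu) (i + 1) = part mu i := by
  suffices descParts (b ::ₘ mu) = (b : ℕ) :: descParts mu by simp [part, this]
  refine List.Perm.eq_of_pairwise' (r := (· ≥ ·)) ?_ ?_ ?_
  · exact List.pairwise_reverse.2 (Multiset.pairwise_sort _ _)
  · refine List.pairwise_cons.2 ⟨fun x hx => ?_,
      List.pairwise_reverse.2 (Multiset.pairwise_sort _ _)⟩
    rw [← Multiset.mem_coe, coe_descParts, Multiset.mem_map] at hx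
    obtain ⟨y, hy, rfl⟩ := hx
    exact hb y hy
  · rw [← Multiset.coe_eq_coe, ← Multiset.cons_coe, coe_descParts, coe_descParts, Multiset.map_cons]

theorem exists_max_cons {mu : Multiset ℕ+} (hmu : mu ≠ 0) :
    ∃ (b : ℕ+) (nu : Multiset ℕ+), mu = b ::ₘ nu ∧ ∀ x ∈ nu, x ≤ b := by
  obtain ⟨x, hx⟩ := Multiset.exists_mem_of_ne_zero hmu
  obtain ⟨b, hb, hmax⟩ := mu.toFinset.exists_max_image id ⟨x, Multiset.mem_toFinset.2 hx⟩
  rw [Multiset.mem_toFinset] at hb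
  obtain ⟨nu, rfl⟩ := Multiset.exists_cons_of_mem hb
  exact ⟨b, nu, rfl, fun y hy => hmax y (Multiset.mem_toFinset.2 (Multiset.mem_cons_of_mem hy))⟩

variable [CharZero R]

theorem coeff_translate_one_det_jacobiTrudi {n k : ℕ} {m : Fin (n + 1) → ℤ}
    (hm : ∀ i : Fin n, m i.succ ≤ k) :
    (translate (fun _ => 1) (jacobiTrudi R m).det).coeff (k + 1) =
      hInt (m 0 - (k + 1)) * (jacobiTrudi R fun i => m i.succ + 1).det := by
  have hone : (fun _ : ℕ+ => (1 : R)) = fun k : ℕ+ => 1 - (0 : R) ^ (k : ℕ) := by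
    funext k
    rw [zero_pow k.ne_zero, sub_zero]
  have hv : (fun r : Fin (n + 1) => Polynomial.C (C (σ := ℕ+) ((1 - 0) * (0 : R) ^ (r : ℕ))) *
      Polynomial.X ^ ((r : ℕ) + 1)) = Pi.single (0 : Fin (n + 1)) Polynomial.X := by
    funext r
    refine Fin.cases ?_ (fun r => ?_) r <;> simp
  conv_lhs => rw [hone]
  have hdet : ((jacobiTrudi R m).map Polynomial.C).det = Polynomial.C (jacobiTrudi R m).det :=
    (RingHom.map_det Polynomial.C _).symm
  rw [translate_det_jacobiTrudi, hv, det_add_vecMulVec, single_dotProduct, hdet,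
    Polynomial.coeff_add, Polynomial.coeff_C_succ, zero_add, Polynomial.coeff_X_mul,
    ← Polynomial.lcoeff_apply k, map_cramer_C, Matrix.cramer_apply, Matrix.det_succ_column_zero,
    Fin.sum_univ_succ, Finset.sum_eq_zero, add_zero]
  · rw [Matrix.updateCol_self, Polynomial.lcoeff_apply,
      coeff_translate_one_hInt, Fin.val_zero, pow_zero, one_mul, sub_sub, add_comm 1 (k : ℤ)]
    congr 2
    ext1 i j
    simp [jacobiTrudi, add_assoc, add_comm (1 : ℤ)]
  · intro i _
    rw [Matrix.updateCol_self, Polynomial.lcoeff_apply, coeff_translate_one_hInt, hInt_of_neg,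
      mul_zero, zero_mul]
    have := hm i
    omega

theorem coeff_translate_one_schur {a b : ℕ+} {mu : Multiset ℕ+} (hb : ∀ x ∈ mu, x ≤ b)
    (hab : b ≤ a) : (translate (fun _ => 1) (schur (R := R) (b ::ₘ mu))).coeff a =
      if a = b then schur mu else 0 := by
  obtain ⟨hpart, hpart_succ⟩ := part_max_cons hb
  have hanti (i : ℕ) : part mu i ≤ b := by
    rw [← hpart_succ, ← hpart]
    exact part_antitone _ i.succ.zero_le
  have hab' : (b : ℕ) ≤ a := hab
  obtain ⟨k, hk⟩ := Nat.exists_eq_add_one.2 a.pos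
  rw [schur_eq_det_jacobiTrudi (Multiset.card_cons b mu), hk,
    coeff_translate_one_det_jacobiTrudi]
  · rw [Fin.val_zero, hpart, schur_eq_det_jacobiTrudi (lam := mu) rfl]
    split_ifs with h
    · subst h
      have hcast : ((a : ℕ) : ℤ) - (0 : ℕ) - (k + 1) = (0 : ℕ) := by omega
      rw [hcast, hInt_natCast, hsym_zero, one_mul]
      congr 2
      funext i
      rw [Fin.val_succ, hpart_succ]
      push_cast
      ring
    · rw [hInt_of_neg, zero_mul]
      have : (a : ℕ) ≠ b := fun h' => h (PNat.coe_injective h')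
      omega
  · intro i
    rw [Fin.val_succ, hpart_succ]
    have := hanti i
    omega

theorem hall_hPar_schur_of_colex {ka mu : Multiset ℕ+}
    (h : toColex (Multiset.toFinsupp mu) ≤ toColex (Multiset.toFinsupp ka)) :
    hall (hPar (R := R) ka) (schur mu) = if ka = mu then 1 else 0 := by
  induction mu using Multiset.strongInductionOn generalizing ka with
  | ih mu ih =>
  rcases eq_or_ne mu 0 with rfl | hmu
  · rcases eq_or_ne ka 0 with rfl | hka
    · rw [schur_eq_det_jacobiTrudi Multiset.card_zero, Matrix.det_fin_zero, if_pos rfl, hPar_zero,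
        ← C_1, C_apply, hall_monomial, hallWeight, Finsupp.prod_zero_index, coeff_monomial,
        if_pos rfl, one_mul, one_mul]
    · obtain ⟨a, ka, rfl, -⟩ := exists_max_cons hka
      rw [if_neg hka]
      refine hall_eq_zero_of_degree_ne (hasDegree_hPar _) (hasDegree_schur 0) ?_
      rw [← Multiset.singleton_add, wt_add, ← ofPart_coe, wt_ofPart, wt_zero]
      exact (Nat.add_pos_left a.pos _).ne'
  obtain ⟨b, mu, rfl, hb⟩ := exists_max_cons hmu
  have hka : ka ≠ 0 := by
    rintro rfl
    exact (colex_lt_of_mem (Multiset.mem_cons_self b mu) (by simp)).not_ge h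
  obtain ⟨a, ka, rfl, ha⟩ := exists_max_cons hka
  have hba : b ≤ a := by
    by_contra! hlt
    refine (colex_lt_of_mem (Multiset.mem_cons_self b mu) fun y hy => ?_).not_ge h
    rcases Multiset.mem_cons.1 hy with rfl | hy
    exacts [hlt, (ha y hy).trans_lt hlt]
  have hone : scaleHom (fun _ => 1) (hsym (R := R) a) = hsym a := by
    simp [scaleHom]
  rw [← Multiset.singleton_add, hPar_add, ← ofPart_coe, hPar_ofPart, ← hone,
    hall_scaleHom_hsym_mul, coeff_translate_one_schur hb hba, ofPart_coe, Multiset.singleton_add]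
  rcases eq_or_ne a b with rfl | hab
  · rw [if_pos rfl, ih mu (Multiset.lt_cons_self mu a)]
    · simp only [Multiset.cons_inj_right]
    · simpa [← Multiset.singleton_add] using h
  · rw [if_neg hab, map_zero, if_neg]
    intro heq
    have hm : a ∈ b ::ₘ mu := heq ▸ Multiset.mem_cons_self a ka
    rcases Multiset.mem_cons.1 hm with h' | h'
    exacts [hab h', hab ((hb a h').antisymm hba)]

theorem hall_hPar_schur {ka mu : Multiset ℕ+} (h : key mu ≤ key ka) :
    hall (hPar (R := R) ka) (schur mu) = if ka = mu then 1 else 0 := by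
  rcases h.eq_or_lt with h | h
  · rw [key_injective h]
    exact hall_hPar_schur_of_colex le_rfl
  · rcases key_lt_key_iff.1 h with hlt | ⟨-, hlt⟩
    · rw [if_neg (by rintro rfl; exact hlt.ne rfl)]
      exact hall_eq_zero_of_degree_ne (hasDegree_hPar ka) (hasDegree_schur mu) hlt.ne
    · exact hall_hPar_schur_of_colex hlt.le

end Kostka

/-! ### The polynomials `Q'` as eigenfunctions -/

section HBasis

variable {R : Type} [Field R]

theorem exists_linearCombination_hPar_sub_mem_above {c : Multiset ℕ+ →₀ R} (hc : c ≠ 0) :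
    ∃ lam, c lam ≠ 0 ∧ Finsupp.linearCombination R hPar c - c lam • hPar lam ∈ above R lam := by
  obtain ⟨lam, hlam, hmin⟩ := c.support.exists_min_image key (Finsupp.support_nonempty_iff.2 hc)
  refine ⟨lam, Finsupp.mem_support_iff.1 hlam, ?_⟩
  classical
  rw [Finsupp.linearCombination_apply, Finsupp.sum, ← Finset.add_sum_erase _ _ hlam,
    add_sub_cancel_left]
  refine sum_mem fun mu hmu => Submodule.smul_mem _ _ (hPar_mem_above ?_)
  obtain ⟨hne, hmu⟩ := Finset.mem_erase.1 hmu
  exact lt_of_le_of_ne (hmin mu hmu) fun h => hne (key_injective h).symm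

/-- A family dual to the `h_λ` up to terms below the diagonal in the order of `key`. -/
def IsTriangularDual (B : Multiset ℕ+ → SymFn R) : Prop :=
  ∀ ⦃ka mu⦄, key mu ≤ key ka → hall (hPar ka) (B mu) = if ka = mu then 1 else 0

namespace IsTriangularDual

variable {B : Multiset ℕ+ → SymFn R}

theorem hall_of_mem_above (hB : IsTriangularDual B) {lam mu : Multiset ℕ+}
    (h : key mu ≤ key lam) {f : SymFn R} (hf : f ∈ above R lam) : hall f (B mu) = 0 := by
  refine (Submodule.span_le (p := LinearMap.ker (hall.flip (B mu)))).2 ?_ hf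
  rintro _ ⟨ka, hka, rfl⟩
  have hlt : key mu < key ka := h.trans_lt hka
  rw [SetLike.mem_coe, LinearMap.mem_ker, LinearMap.flip_apply, hB hlt.le,
    if_neg (by rintro rfl; exact hlt.ne rfl)]

theorem hall_eq (hB : IsTriangularDual B) {lam : Multiset ℕ+} {f : SymFn R} {c : R}
    (h : f - c • hPar lam ∈ above R lam) : hall f (B lam) = c := by
  rw [← sub_add_cancel f (c • hPar lam), map_add, LinearMap.add_apply,
    hB.hall_of_mem_above le_rfl h, map_smul, LinearMap.smul_apply, hB le_rfl, if_pos rfl, zero_add,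
    smul_eq_mul, mul_one]

end IsTriangularDual

variable [CharZero R]

theorem span_range_hPar : Submodule.span R (Set.range (hPar (R := R))) = ⊤ := by
  let S : Subalgebra R (SymFn R) :=
    (Submodule.span R (Set.range hPar)).toSubalgebra (Submodule.subset_span ⟨0, hPar_zero⟩) <| by
      intro f g hf hg
      have hfg := Submodule.mul_mem_mul hf hg
      rw [Submodule.span_mul_span] at hfg
      refine Submodule.span_mono ?_ hfg
      rintro _ ⟨_, ⟨a, rfl⟩, _, ⟨b, rfl⟩, rfl⟩
      exact ⟨a + b, hPar_add a b⟩
  have hsym_mem (n : ℕ) : hsym n ∈ S := Submodule.subset_span ⟨ofPart n, hPar_ofPart n⟩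
  have X_mem (n : ℕ) : X n.succPNat ∈ S := by
    induction n using Nat.strong_induction_on with
    | _ n ih =>
      have hn : (n + 1 : R) ≠ 0 := n.cast_add_one_ne_zero
      have h : (n + 1 : R) • hsym (R := R) (n + 1) =
          ∑ i ∈ Finset.range n, X i.succPNat * hsym (n - i) + X n.succPNat := by
        rw [hsym, smul_smul, mul_inv_cancel₀ hn, one_smul, Finset.sum_range_succ, Nat.sub_self,
          hsym_zero, mul_one]
        rfl
      rw [← sub_eq_iff_eq_add'.2 h]
      exact sub_mem (S.smul_mem (hsym_mem _) _)
        (sum_mem fun i hi => mul_mem (ih i (Finset.mem_range.1 hi)) (hsym_mem _))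
  have htop : S = ⊤ := by
    rw [← top_le_iff, ← adjoin_range_X, Algebra.adjoin_le_iff]
    rintro _ ⟨k, rfl⟩
    rw [← PNat.succPNat_natPred k]
    exact X_mem _
  exact congrArg Subalgebra.toSubmodule htop

theorem exists_sub_smul_hPar_mem_above {f : SymFn R} (hf : f ≠ 0) :
    ∃ lam, ∃ c : R, c ≠ 0 ∧ f - c • hPar lam ∈ above R lam := by
  obtain ⟨c, rfl⟩ : ∃ c, Finsupp.linearCombination R hPar c = f := by
    rw [← LinearMap.mem_range, Finsupp.range_linearCombination, span_range_hPar]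
    exact Submodule.mem_top
  obtain ⟨lam, hlam⟩ := exists_linearCombination_hPar_sub_mem_above (c := c)
    (by rintro rfl; exact hf (map_zero _))
  exact ⟨lam, c lam, hlam⟩

theorem isTriangularDual_schur : IsTriangularDual (schur (R := R)) := fun _ _ => hall_hPar_schur

theorem linearIndependent_hPar : LinearIndependent R (hPar (R := R)) := by
  refine linearIndependent_iff.2 fun c hc => by_contra fun h0 => ?_
  obtain ⟨lam, hlam, hmem⟩ := exists_linearCombination_hPar_sub_mem_above h0
  rw [hc] at hmem
  have h := isTriangularDual_schur.hall_eq hmem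
  rw [map_zero, LinearMap.zero_apply] at h
  exact hlam h.symm

end HBasis

section Qprime

variable {R : Type} [Field R] {q t : R} {P : Multiset ℕ+ → SymFn R}

theorem qtHom_injective (hq : ∀ k : ℕ+, q ^ (k : ℕ) ≠ 1) (ht : ∀ k : ℕ+, t ^ (k : ℕ) ≠ 1) :
    Function.Injective (qtHom q t) := by
  intro f g h
  ext1 m
  have hm := congrArg (coeff m) h
  rw [qtHom, coeff_scaleHom, coeff_scaleHom] at hm
  refine mul_right_cancel₀ (Finset.prod_ne_zero_iff.2 fun k _ => pow_ne_zero _ ?_) hm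
  exact div_ne_zero (sub_ne_zero.2 (hq k).symm) (sub_ne_zero.2 (ht k).symm)

theorem Qprime_eq_smul_qtHom (lam : Multiset ℕ+) : Qprime q t P lam =
    (innerQT q t (P lam) (P lam))⁻¹ • qtHom q t (P lam) :=
  map_smul (qtHom q t) _ _

variable [CharZero R]

theorem isTriangularDual_macdonald (hP : IsMacdonaldBasis q t P) :
    IsTriangularDual P := by
  intro ka mu h
  have hle : Submodule.span R (schur '' {ka | StrictDom ka mu}) ≤
      LinearMap.ker (hall (hPar (R := R) ka)) := by
    refine Submodule.span_le.2 ?_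
    rintro _ ⟨nu, hnu, rfl⟩
    have hlt := (key_lt_of_strictDom hnu).trans_le h
    rw [SetLike.mem_coe, LinearMap.mem_ker, hall_hPar_schur hlt.le,
      if_neg (by rintro rfl; exact hlt.ne rfl)]
  rw [← sub_add_cancel (P mu) (schur mu), map_add, hle (hP.1 mu), zero_add, hall_hPar_schur h]

/-- The lower terms of `Q'_λ` cancel because `Q'_λ` pairs to `0` with every `P_μ`, `μ ≠ λ`. -/
theorem qtHom_macdonald_sub_mem_above (hq : ∀ k : ℕ+, q ^ (k : ℕ) ≠ 1)
    (ht : ∀ k : ℕ+, t ^ (k : ℕ) ≠ 1) (hP : IsMacdonaldBasis q t P) (lam : Multiset ℕ+) :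
    innerQT q t (P lam) (P lam) ≠ 0 ∧
      qtHom q t (P lam) - innerQT q t (P lam) (P lam) • hPar lam ∈ above R lam := by
  have hdual := isTriangularDual_macdonald hP
  have hPlam : P lam ≠ 0 := fun h => by
    have h1 := hdual (le_refl (key lam))
    rw [h, map_zero, if_pos rfl] at h1
    exact zero_ne_one h1
  obtain ⟨ka, c, hc, hmem⟩ := exists_sub_smul_hPar_mem_above
    ((map_ne_zero_iff _ (qtHom_injective hq ht)).2 hPlam)
  have hpair : innerQT q t (P ka) (P lam) = c := by
    rw [innerQT_eq_hall, hall_comm]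
    exact hdual.hall_eq hmem
  obtain rfl : ka = lam := by_contra fun hne => hc (hpair.symm.trans (hP.2 ka lam hne))
  exact ⟨hpair ▸ hc, hpair ▸ hmem⟩

theorem macdonaldOp_sub_smul_mem_above (q u : R) {lam : Multiset ℕ+} {f : SymFn R}
    (hf : f - hPar lam ∈ above R lam) :
    macdonaldOp q u f - eigenvalue q u lam • f ∈ above R lam := by
  have h := sub_mem (macdonaldOp_sub_smul_hPar_mem_above q u (c := 1) (by rwa [one_smul]))
    (Submodule.smul_mem _ (eigenvalue q u lam) hf)
  rwa [one_mul, smul_sub, sub_sub_sub_cancel_right] at h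

theorem Qprime_sub_hPar_mem_above (hq : ∀ k : ℕ+, q ^ (k : ℕ) ≠ 1)
    (ht : ∀ k : ℕ+, t ^ (k : ℕ) ≠ 1) (hP : IsMacdonaldBasis q t P) (lam : Multiset ℕ+) :
    Qprime q t P lam - hPar lam ∈ above R lam := by
  obtain ⟨hnorm, hmem⟩ := qtHom_macdonald_sub_mem_above hq ht hP lam
  have h := Submodule.smul_mem _ (innerQT q t (P lam) (P lam))⁻¹ hmem
  rwa [smul_sub, smul_smul, inv_mul_cancel₀ hnorm, one_smul, ← Qprime_eq_smul_qtHom] at h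

theorem macdonaldOp_Qprime (hq0 : q ≠ 0) (hq : ∀ k : ℕ+, q ^ (k : ℕ) ≠ 1)
    (ht : ∀ k : ℕ+, t ^ (k : ℕ) ≠ 1) (hP : IsMacdonaldBasis q t P) (lam : Multiset ℕ+) :
    macdonaldOp q⁻¹ t (Qprime q t P lam) = eigenvalue q⁻¹ t lam • Qprime q t P lam := by
  have hdual := isTriangularDual_macdonald hP
  have hD := macdonaldOp_sub_smul_mem_above q⁻¹ t (Qprime_sub_hPar_mem_above hq ht hP lam)
  refine sub_eq_zero.1 (by_contra fun hne => ?_)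
  obtain ⟨ka, c, hc, hlead⟩ := exists_sub_smul_hPar_mem_above hne
  refine hc ((hdual.hall_eq hlead).symm.trans ?_)
  rcases le_or_gt (key ka) (key lam) with hle | hlt
  · exact hdual.hall_of_mem_above hle hD
  have hka : qtHom q t (P ka) ∈ above R lam := by
    have h := (qtHom_macdonald_sub_mem_above hq ht hP ka).2
    rw [← sub_add_cancel (qtHom q t (P ka))]
    exact add_mem (above_le_above hlt.le h) (Submodule.smul_mem _ _ (hPar_mem_above hlt))
  have horth : hall (qtHom q t (P lam)) (P ka) = 0 := by
    rw [hall_comm, ← innerQT_eq_hall]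
    exact hP.2 ka lam (by rintro rfl; exact hlt.ne rfl)
  rw [Qprime_eq_smul_qtHom, map_sub, LinearMap.sub_apply, map_smul, map_smul, map_smul, map_smul,
    LinearMap.smul_apply, LinearMap.smul_apply, LinearMap.smul_apply, horth,
    hall_macdonaldOp_qtHom hq0 ht, hdual.hall_of_mem_above le_rfl (macdonaldOp_mem_above _ _ hka)]
  simp only [smul_zero, sub_zero]

end Qprime

/-! ### Plethysm at a root of unity -/

section Plethysm

theorem prod_primitiveRoot_pow {S : Type*} [CommRing S] [IsDomain S] {l : ℕ} {ζ : S}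
    (hζ : IsPrimitiveRoot ζ l) (hl : 0 < l) : ∏ i ∈ Finset.range l, ζ ^ i = (-1) ^ (l - 1) := by
  have h := congrArg (Polynomial.eval 0) (X_pow_sub_C_eq_prod hζ hl (one_pow l))
  obtain ⟨l, rfl⟩ := Nat.exists_eq_succ_of_ne_zero hl.ne'
  simp only [Polynomial.eval_sub, Polynomial.eval_pow, Polynomial.eval_X, Polynomial.eval_C,
    Polynomial.eval_prod, mul_one, zero_sub, Finset.prod_neg, Finset.card_range,
    zero_pow l.succ_ne_zero] at h
  have hsq : (-1 : S) ^ l * (-1) ^ l = 1 := by rw [← mul_pow, neg_one_mul, neg_neg, one_pow]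
  rw [Nat.succ_eq_add_one, pow_succ] at h
  rw [Nat.succ_sub_one]
  linear_combination (-1) ^ l * h - (∏ i ∈ Finset.range (l + 1), ζ ^ i) * hsq

variable {R : Type} [Field R]

theorem plethP_C (l : ℕ+) (a : R) : plethP l (C a) = C a := (plethP l).commutes a

theorem plethP_X (l k : ℕ+) : plethP l (X k : SymFn R) = X (l * k) := aeval_X _ k

theorem plethP_eq_rename (l : ℕ+) : plethP (R := R) l = rename (l * ·) :=
  algHom_ext fun k => by rw [plethP_X, rename_X]

theorem plethP_injective (l : ℕ+) : Function.Injective (plethP (R := R) l) :=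
  plethP_eq_rename (R := R) l ▸ rename_injective _ (mul_right_injective l)

theorem key_nsmul_lt {l : ℕ} (hl : 0 < l) {a b : Multiset ℕ+} (h : key a < key b) :
    key (l • a) < key (l • b) := by
  rw [map_nsmul, map_nsmul]
  exact nsmul_lt_nsmul_right hl.ne' h

theorem mul_mem_above {a b : Multiset ℕ+} {f g : SymFn R} (hf : f ∈ above R a)
    (hg : g ∈ above R b) : f * g ∈ above R (a + b) := by
  have h := Submodule.mul_mem_mul hf hg
  rw [above, above, Submodule.span_mul_span] at h
  refine Submodule.span_mono ?_ h
  rintro _ ⟨_, ⟨x, hx, rfl⟩, _, ⟨y, hy, rfl⟩, rfl⟩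
  refine ⟨x + y, ?_, hPar_add x y⟩
  rw [Set.mem_ofPred_eq, map_add, map_add]
  exact add_lt_add hx hy

theorem mul_hPar_mem_above {a : Multiset ℕ+} {f : SymFn R} (hf : f ∈ above R a)
    (b : Multiset ℕ+) : f * hPar b ∈ above R (a + b) := by
  refine (Submodule.span_le (p := (above R (a + b)).comap (LinearMap.mulRight R (hPar b)))).2 ?_ hf
  rintro _ ⟨x, hx, rfl⟩
  rw [SetLike.mem_coe, Submodule.mem_comap, LinearMap.mulRight_apply, ← hPar_add]
  refine hPar_mem_above ?_
  rw [map_add, map_add]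
  exact add_lt_add_left hx _

theorem mul_sub_smul_hPar_mem_above {a b : Multiset ℕ+} {f g : SymFn R} {c d : R}
    (hf : f - c • hPar a ∈ above R a) (hg : g - d • hPar b ∈ above R b) :
    f * g - (c * d) • hPar (a + b) ∈ above R (a + b) := by
  have h := add_mem (mul_mem_above hf hg) (add_mem
    (Submodule.smul_mem _ d (mul_hPar_mem_above hf b))
    (Submodule.smul_mem _ c (add_comm b a ▸ mul_hPar_mem_above hg a)))
  convert h using 1
  rw [hPar_add]
  simp only [smul_eq_C_mul, C_mul]
  ring

variable [CharZero R] (l : ℕ+) {ζ : R}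

theorem plethP_hsym_eq_sum (hζ : IsPrimitiveRoot ζ (l : ℕ)) (n : ℕ) :
    plethP l (hsym (R := R) n) = ∑ a ∈ (Finset.range l).finsuppAntidiag (l * n),
      (∏ i ∈ Finset.range l, (ζ ^ i) ^ a i) • hPar (∑ i ∈ Finset.range l, ofPart (a i)) := by
  have h := congrArg (PowerSeries.coeff ((l : ℕ) * n)) (prod_rescale_hSeries l hζ)
  rw [PowerSeries.coeff_expand_mul, PowerSeries.coeff_prod] at h
  refine (Eq.trans ?_ h.symm).trans (Finset.sum_congr rfl fun a _ => ?_)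
  · simp [hSeries]
  · rw [hPar_sum_ofPart, smul_eq_C_mul, map_prod, ← Finset.prod_mul_distrib]
    simp [hSeries]

theorem key_nsmul_ofPart_lt {n : ℕ} {a : ℕ →₀ ℕ}
    (ha : a ∈ (Finset.range l).finsuppAntidiag (l * n)) (hne : ∃ i ∈ Finset.range l, a i ≠ n) :
    key ((l : ℕ) • ofPart n) < key (∑ i ∈ Finset.range l, ofPart (a i)) := by
  have hsum := (Finset.mem_finsuppAntidiag.1 ha).1
  obtain ⟨i, hi, hlt⟩ : ∃ i ∈ Finset.range l, n < a i := by
    by_contra! hle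
    obtain ⟨i, hi, hne⟩ := hne
    have h := (Finset.sum_eq_sum_iff_of_le hle).1 (by simpa using hsum) i hi
    exact hne h
  refine key_lt_key_iff.2 (.inr ⟨?_, colex_lt_of_mem (x := (a i).toPNat (Nat.zero_lt_of_lt hlt))
    (Multiset.mem_sum.2 ⟨i, hi, mem_ofPart.2 rfl⟩) fun y hy => ?_⟩)
  · rw [← Finset.card_range (l : ℕ), ← Finset.sum_const, wt_sum, wt_sum]
    simp only [wt_ofPart]
    simpa using hsum.symm
  · rw [← PNat.coe_lt_coe, mem_ofPart.1 (Multiset.mem_of_mem_nsmul hy)]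
    exact hlt

theorem plethP_hsym_sub_mem_above (hζ : IsPrimitiveRoot ζ (l : ℕ)) (n : ℕ) :
    plethP l (hsym n) - ((-1 : R) ^ (((l : ℕ) - 1) * n)) • hPar ((l : ℕ) • ofPart n) ∈
      above R ((l : ℕ) • ofPart n) := by
  classical
  let a₀ : ℕ →₀ ℕ := Finsupp.indicator (Finset.range l) fun _ _ => n
  have ha₀ {i : ℕ} (hi : i ∈ Finset.range l) : a₀ i = n := Finsupp.indicator_of_mem hi _
  have hmem : a₀ ∈ (Finset.range l).finsuppAntidiag (l * n) := by
    refine Finset.mem_finsuppAntidiag.2 ⟨?_, Finsupp.support_indicator_subset _ _⟩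
    rw [Finset.sum_congr rfl fun i hi => ha₀ hi, Finset.sum_const, Finset.card_range, smul_eq_mul]
  rw [plethP_hsym_eq_sum l hζ, ← Finset.add_sum_erase _ _ hmem,
    Finset.prod_congr rfl fun i hi => by rw [ha₀ hi],
    Finset.sum_congr (f := fun i => ofPart (a₀ i)) rfl fun i hi => by rw [ha₀ hi],
    Finset.prod_pow, prod_primitiveRoot_pow hζ l.pos, ← pow_mul, Finset.sum_const,
    Finset.card_range, add_sub_cancel_left]
  refine sum_mem fun a ha => Submodule.smul_mem _ _ (hPar_mem_above ?_)
  obtain ⟨hne, ha⟩ := Finset.mem_erase.1 ha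
  refine key_nsmul_ofPart_lt l ha ?_
  by_contra! h
  refine hne (Finsupp.ext fun i => ?_)
  by_cases hi : i ∈ Finset.range l
  · rw [h i hi, ha₀ hi]
  · rw [Finsupp.indicator_of_notMem hi]
    exact Finsupp.notMem_support_iff.1 fun h => hi ((Finset.mem_finsuppAntidiag.1 ha).2 h)

theorem plethP_hPar_sub_mem_above (hζ : IsPrimitiveRoot ζ (l : ℕ)) (nu : Multiset ℕ+) :
    plethP l (hPar (R := R) nu) - ((-1 : R) ^ (((l : ℕ) - 1) * wt nu)) • hPar ((l : ℕ) • nu) ∈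
      above R ((l : ℕ) • nu) := by
  induction nu using Multiset.induction_on with
  | empty => simp [hPar_zero, wt_zero]
  | cons a nu ih =>
    rw [← Multiset.singleton_add, ← ofPart_coe, hPar_add, map_mul, wt_add, mul_add, pow_add,
      smul_add, hPar_ofPart, wt_ofPart]
    exact mul_sub_smul_hPar_mem_above (plethP_hsym_sub_mem_above l hζ a) ih

theorem plethP_sub_smul_hPar_mem_above (hζ : IsPrimitiveRoot ζ (l : ℕ)) {nu : Multiset ℕ+}
    {f : SymFn R} {c : R} (hf : f - c • hPar nu ∈ above R nu) :
    plethP l f - (c * (-1) ^ (((l : ℕ) - 1) * wt nu)) • hPar ((l : ℕ) • nu) ∈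
      above R ((l : ℕ) • nu) :=
  map_sub_smul_hPar_mem_above (T := (plethP l).toLinearMap) (σ := ((l : ℕ) • ·))
    (fun _ h => key_nsmul_lt l.pos h) (plethP_hPar_sub_mem_above l hζ) hf

end Plethysm

section KernelAndImage

variable {R : Type} [Field R] {l : ℕ+} {u : R}

theorem translate_plethP (hu : u ^ (l : ℕ) = 1) (g : SymFn R) :
    translate (fun k => 1 - u ^ (k : ℕ)) (plethP l g) = Polynomial.C (plethP l g) := by
  induction g using MvPolynomial.induction_on with
  | C a => rw [plethP_C, translate_C]
  | add f g hf hg => rw [map_add, map_add, hf, hg, map_add]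
  | mul_X f k hf =>
    rw [map_mul, map_mul, hf, plethP_X, translate_X, PNat.mul_coe, pow_mul, hu, one_pow, sub_self,
      C_0, map_zero, zero_mul, add_zero, map_mul]

theorem macdonaldOp_plethP_mul (q : R) (hu : u ^ (l : ℕ) = 1) (g f : SymFn R) :
    macdonaldOp q u (plethP l g * f) = plethP l g * macdonaldOp q u f := by
  simp only [macdonaldOp, LinearMap.sub_apply, LinearMap.id_apply, vertexOp_apply]
  rw [map_mul, translate_plethP hu, umbral_C_mul, mul_sub]

theorem macdonaldOp_plethP (q : R) (hu : u ^ (l : ℕ) = 1) (g : SymFn R) :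
    macdonaldOp q u (plethP l g) = 0 := by
  rw [macdonaldOp, LinearMap.sub_apply, LinearMap.id_apply, vertexOp_apply, translate_plethP hu,
    umbral_C, gSym_zero, mul_one, sub_self]

variable [CharZero R]

theorem eq_of_sub_smul_hPar_mem_above {f : SymFn R} {a b : Multiset ℕ+} {c d : R} (hc : c ≠ 0)
    (hd : d ≠ 0) (hfa : f - c • hPar a ∈ above R a) (hfb : f - d • hPar b ∈ above R b) :
    a = b := by
  have hne {a b : Multiset ℕ+} {c d : R} (hc : c ≠ 0) (hfa : f - c • hPar a ∈ above R a)
      (hfb : f - d • hPar b ∈ above R b) : ¬ key a < key b := fun hlt => by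
    refine hc ((isTriangularDual_schur.hall_eq hfa).symm.trans
      (isTriangularDual_schur.hall_of_mem_above le_rfl ?_))
    rw [← sub_add_cancel f (d • hPar b)]
    exact add_mem (above_le_above hlt.le hfb) (Submodule.smul_mem _ _ (hPar_mem_above hlt))
  exact key_injective (le_antisymm (not_lt.1 (hne hd hfb hfa)) (not_lt.1 (hne hc hfa hfb)))

theorem range_plethP_sup_span_eq_top (hu : IsPrimitiveRoot u (l : ℕ)) :
    LinearMap.range (plethP (R := R) l).toLinearMap ⊔
      Submodule.span R (hPar '' {ka | ¬ ∃ nu, ka = (l : ℕ) • nu}) = ⊤ := by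
  set S := LinearMap.range (plethP (R := R) l).toLinearMap ⊔
    Submodule.span R (hPar '' {ka | ¬ ∃ nu, ka = (l : ℕ) • nu})
  have hPar_mem (ka : Multiset ℕ+) : hPar ka ∈ S := by
    induction ka using key_induction with
    | ind ka ih =>
      by_cases h : ∃ nu, ka = (l : ℕ) • nu
      · obtain ⟨nu, rfl⟩ := h
        have habove : above R ((l : ℕ) • nu) ≤ S := by
          refine Submodule.span_le.2 ?_
          rintro _ ⟨ka, hka, rfl⟩
          exact ih ka hka
        have h := sub_mem (Submodule.mem_sup_left (LinearMap.mem_range_self _ (hPar nu)))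
          (habove (plethP_hPar_sub_mem_above l hu nu))
        rw [AlgHom.toLinearMap_apply, sub_sub_cancel] at h
        exact (Submodule.smul_mem_iff S (pow_ne_zero _ (neg_ne_zero.2 one_ne_zero))).1 h
      · exact Submodule.mem_sup_right (Submodule.subset_span ⟨ka, h, rfl⟩)
  rw [← top_le_iff, ← span_range_hPar]
  exact Submodule.span_le.2 (Set.range_subset_iff.2 hPar_mem)

variable {q : R}

theorem mem_range_plethP_of_macdonaldOp (hu : IsPrimitiveRoot u (l : ℕ))
    (hE : ∀ lam, eigenvalue q u lam = 0 → ∃ nu, lam = (l : ℕ) • nu) {f g : SymFn R}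
    (h : macdonaldOp q u f = plethP l g) : ∃ f', plethP l f' = f := by
  obtain ⟨_, ⟨f', rfl⟩, y, hy, rfl⟩ := Submodule.mem_sup.1
    ((range_plethP_sup_span_eq_top (R := R) hu).ge (Submodule.mem_top (x := f)))
  rw [Finsupp.mem_span_image_iff_linearCombination] at hy
  obtain ⟨c, hc, rfl⟩ := hy
  rcases eq_or_ne c 0 with rfl | hc0
  · exact ⟨f', by rw [map_zero, add_zero]; rfl⟩
  obtain ⟨ka, hcka, hka⟩ := exists_linearCombination_hPar_sub_mem_above hc0
  have hnot : ¬ ∃ nu, ka = (l : ℕ) • nu := hc (Finsupp.mem_support_iff.2 hcka)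
  have hlead := macdonaldOp_sub_smul_hPar_mem_above q u hka
  have hne := mul_ne_zero hcka fun h => hnot (hE ka h)
  rw [map_add, AlgHom.toLinearMap_apply, macdonaldOp_plethP q hu.pow_eq_one, zero_add] at h
  rw [h] at hlead
  rcases eq_or_ne g 0 with rfl | hg
  · refine absurd (isTriangularDual_schur.hall_eq hlead).symm ?_
    rwa [map_zero, map_zero]
  · obtain ⟨nu, d, hd, hnu⟩ := exists_sub_smul_hPar_mem_above hg
    exact absurd ⟨nu, eq_of_sub_smul_hPar_mem_above hne
      (mul_ne_zero hd (pow_ne_zero _ (neg_ne_zero.2 one_ne_zero))) hlead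
      (plethP_sub_smul_hPar_mem_above l hu hnu)⟩ hnot

theorem eq_zero_of_macdonaldOp_eq_plethP (hu : IsPrimitiveRoot u (l : ℕ))
    (hE : ∀ lam, eigenvalue q u lam = 0 → ∃ nu, lam = (l : ℕ) • nu) {f g : SymFn R}
    (h : macdonaldOp q u f = plethP l g) : g = 0 := by
  obtain ⟨f', rfl⟩ := mem_range_plethP_of_macdonaldOp hu hE h
  rw [macdonaldOp_plethP q hu.pow_eq_one] at h
  exact plethP_injective l (h.symm.trans (map_zero _).symm)

end KernelAndImage

/-! ### Eigenvalues -/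

section Eigenvalue

section CommRing

variable {A : Type} [CommRing A]

theorem eigenvalue_zero (q u : A) : eigenvalue q u 0 = 0 := Finset.sum_empty

theorem map_eigenvalue {B : Type} [CommRing B] (φ : A →+* B) (q u : A) (lam : Multiset ℕ+) :
    φ (eigenvalue q u lam) = eigenvalue (φ q) (φ u) lam := by
  simp only [eigenvalue, map_sum, map_mul, map_sub, map_pow, map_one]

theorem eigenvalue_max_cons (q u : A) {b : ℕ+} {mu : Multiset ℕ+} (hb : ∀ x ∈ mu, x ≤ b) :
    eigenvalue q u (b ::ₘ mu) = (1 - u) * (q ^ (b : ℕ) - 1) + u * eigenvalue q u mu := by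
  obtain ⟨hpart, hpart_succ⟩ := part_max_cons hb
  rw [eigenvalue, eigenvalue, Fin.sum_univ_eq_sum_range
    fun i => (1 - u) * u ^ i * (q ^ part (b ::ₘ mu) i - 1), Multiset.card_cons,
    Finset.sum_range_succ', hpart, Finset.mul_sum, Fin.sum_univ_eq_sum_range
    fun i => u * ((1 - u) * u ^ i * (q ^ part mu i - 1)), add_comm, pow_zero, mul_one]
  refine congrArg _ (Finset.sum_congr rfl fun i _ => ?_)
  rw [hpart_succ]
  ring

theorem eigenvalue_eq_sum_count (q u : A) (lam : Multiset ℕ+) {s : Finset ℕ+}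
    (hs : ∀ a ∈ lam, a ∈ s) : eigenvalue q u lam =
      ∑ a ∈ s, u ^ lam.countP (a < ·) * (1 - u ^ lam.count a) * (q ^ (a : ℕ) - 1) := by
  induction lam using Multiset.strongInductionOn with
  | ih lam ih =>
    rcases eq_or_ne lam 0 with rfl | hlam
    · simp [eigenvalue_zero]
    obtain ⟨b, mu, rfl, hb⟩ := exists_max_cons hlam
    have hbs : b ∈ s := hs b (Multiset.mem_cons_self b mu)
    rw [eigenvalue_max_cons q u hb, ih mu (Multiset.lt_cons_self mu b)
      fun a ha => hs a (Multiset.mem_cons_of_mem ha), Finset.mul_sum,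
      ← Finset.sum_ite_eq_of_mem' s b (fun a => (1 - u) * (q ^ (a : ℕ) - 1)) hbs,
      ← Finset.sum_add_distrib]
    refine Finset.sum_congr rfl fun a _ => ?_
    rw [Multiset.countP_cons, Multiset.count_cons]
    have hzero {a : ℕ+} (ha : b ≤ a) : mu.countP (a < ·) = 0 :=
      Multiset.countP_eq_zero.2 fun x hx => ((hb x hx).trans ha).not_gt
    rcases lt_trichotomy a b with h | rfl | h
    · rw [if_neg h.ne, if_neg h.ne, if_pos h]
      ring
    · rw [if_pos rfl, if_pos rfl, if_neg (lt_irrefl a), hzero le_rfl]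
      ring
    · have hcount : mu.count a = 0 := Multiset.count_eq_zero_of_notMem fun ha => (hb a ha).not_gt h
      rw [if_neg h.ne', if_neg h.ne', if_neg h.not_gt, hcount]
      ring

theorem eigenvalue_nsmul_eq_zero (q : A) {u : A} {l : ℕ} (hu : u ^ l = 1) (nu : Multiset ℕ+) :
    eigenvalue q u (l • nu) = 0 := by
  rw [eigenvalue_eq_sum_count (s := (l • nu).toFinset) _ _ _ fun a => Multiset.mem_toFinset.2]
  refine Finset.sum_eq_zero fun a _ => ?_
  rw [Multiset.count_nsmul, pow_mul, hu, one_pow, sub_self, mul_zero, zero_mul]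

end CommRing

section Transcendental

variable {F K : Type} [Field F] [Field K] [Algebra F K] {q : K}

theorem exists_eq_nsmul_of_dvd_count {l : ℕ} {lam : Multiset ℕ+} (h : ∀ a, l ∣ lam.count a) :
    ∃ nu, lam = l • nu := by
  refine ⟨Finsupp.toMultiset ((Multiset.toFinsupp lam).mapRange (· / l) (Nat.zero_div l)), ?_⟩
  ext a
  rw [Multiset.count_nsmul, Finsupp.count_toMultiset, Finsupp.mapRange_apply,
    Multiset.toFinsupp_apply, Nat.mul_div_cancel' (h a)]

theorem linearIndependent_pow_of_transcendental (hq : Transcendental F q) :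
    LinearIndependent F fun n : ℕ => q ^ n := by
  simpa [Function.comp_def] using (Polynomial.basisMonomials F).linearIndependent.map'
    (Polynomial.aeval q).toLinearMap
    (LinearMap.ker_eq_bot.2 (transcendental_iff_injective.1 hq))

theorem linearIndependent_pow_sub_one (hq : Transcendental F q) :
    LinearIndependent F fun a : ℕ+ => q ^ (a : ℕ) - 1 := by
  have h := (affineIndependent_iff_linearIndependent_vsub F (fun n : ℕ => q ^ n) 0).1
    (linearIndependent_pow_of_transcendental hq).affineIndependent
  simpa [Function.comp_def] using h.comp (fun a : ℕ+ => ⟨a, a.ne_zero⟩)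
    fun a b hab => PNat.eq (by simpa using hab)

theorem exists_eq_nsmul_of_eigenvalue_eq_zero (hq : Transcendental F q) {l : ℕ+} {ζ : F}
    (hζ : IsPrimitiveRoot ζ (l : ℕ)) {lam : Multiset ℕ+}
    (h : eigenvalue q (algebraMap F K ζ) lam = 0) : ∃ nu, lam = (l : ℕ) • nu := by
  refine exists_eq_nsmul_of_dvd_count fun a => ?_
  rw [eigenvalue_eq_sum_count (s := insert a lam.toFinset) _ _ _ fun b hb =>
    Finset.mem_insert_of_mem (Multiset.mem_toFinset.2 hb)] at h
  have hcoeff : ζ ^ lam.countP (a < ·) * (1 - ζ ^ lam.count a) = 0 := by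
    have hli := (linearIndependent_iff' (R := F) (M := K)).1 (linearIndependent_pow_sub_one hq)
    refine hli (insert a lam.toFinset) (fun b => ζ ^ lam.countP (b < ·) * (1 - ζ ^ lam.count b))
      ?_ a (Finset.mem_insert_self _ _)
    simpa only [Algebra.smul_def, map_mul, map_sub, map_one, map_pow] using h
  have hone := (mul_eq_zero.1 hcoeff).resolve_left (pow_ne_zero _ (hζ.ne_zero l.ne_zero))
  exact hζ.dvd_of_pow_eq_one _ (sub_eq_zero.1 hone).symm

/-- The sum `∑ (q^{ν_i} - 1)`, which up to a constant is the derivative in `u` of the eigenvalue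
at `ν^l` at an `l`-th root of unity. -/
def powSum (q : K) (nu : Multiset ℕ+) : K := (nu.map fun a : ℕ+ => q ^ (a : ℕ) - 1).sum

theorem powSum_injective [CharZero F] (hq : Transcendental F q) :
    Function.Injective (powSum q) := by
  have hli : LinearIndependent ℕ fun a : ℕ+ => q ^ (a : ℕ) - 1 :=
    (linearIndependent_pow_sub_one hq).restrict_scalars
      (by simpa [nsmul_eq_mul] using Nat.cast_injective)
  have heq (nu : Multiset ℕ+) : powSum q nu = Finsupp.linearCombination ℕ
      (fun a : ℕ+ => q ^ (a : ℕ) - 1) (Multiset.toFinsupp nu) := by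
    rw [powSum, Finset.sum_multiset_map_count, Finsupp.linearCombination_apply, Finsupp.sum,
      Multiset.toFinsupp_support]
    rfl
  intro a b hab
  rw [heq, heq] at hab
  exact Multiset.toFinsupp.injective (hli hab)

end Transcendental

end Eigenvalue

/-! ### First-order deformation -/

section Deformation

open DualNumber TrivSqZeroExt

variable {K : Type} [Field K]

/-- The derivation `p_k ↦ k z^k`, the infinitesimal version of `translate`. -/
def tangent : Derivation K (SymFn K) (Polynomial (SymFn K)) :=
  mkDerivation K fun k => (k : Polynomial (SymFn K)) * Polynomial.X ^ (k : ℕ)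

/-- The derivation `p_k ↦ k h_k[(q - 1) X]`. -/
def gDerivation (q : K) : Derivation K (SymFn K) (SymFn K) := (umbral (gSym q)).compDer tangent

theorem eps_smul_map_inj {f g : SymFn K} :
    (ε : K[ε]) • map (algebraMap K K[ε]) f = (ε : K[ε]) • map (algebraMap K K[ε]) g ↔ f = g := by
  refine ⟨fun h => MvPolynomial.ext _ _ fun m => ?_, fun h => h ▸ rfl⟩
  have hm := congrArg TrivSqZeroExt.snd (congrArg (coeff m) h)
  simpa [coeff_smul, coeff_map, TrivSqZeroExt.algebraMap_eq_inl] using hm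

theorem eps_smul_map_fstHom (f : SymFn K[ε]) :
    (ε : K[ε]) • map (algebraMap K K[ε]) (map (fstHom K K K : K[ε] →+* K) f) = (ε : K[ε]) • f := by
  refine MvPolynomial.ext _ _ fun m => ?_
  rw [coeff_smul, coeff_smul, coeff_map, coeff_map]
  ext <;> simp [TrivSqZeroExt.algebraMap_eq_inl]

theorem exists_map_add_eps_smul_map (f : SymFn K[ε]) : ∃ f₁ : SymFn K,
    f = map (algebraMap K K[ε]) (map (fstHom K K K : K[ε] →+* K) f) +
      (ε : K[ε]) • map (algebraMap K K[ε]) f₁ := by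
  induction f using MvPolynomial.induction_on with
  | C a =>
    refine ⟨C a.snd, ?_⟩
    rw [map_C, map_C, map_C, smul_eq_C_mul, ← C_mul, ← C_add]
    congr 1
    ext <;> simp [TrivSqZeroExt.algebraMap_eq_inl]
  | add f g hf hg =>
    obtain ⟨f₁, hf⟩ := hf
    obtain ⟨g₁, hg⟩ := hg
    refine ⟨f₁ + g₁, ?_⟩
    simp only [map_add, smul_add]
    linear_combination hf + hg
  | mul_X f k hf =>
    obtain ⟨f₁, hf⟩ := hf
    refine ⟨f₁ * X k, ?_⟩
    simp only [map_mul, map_X, ← smul_mul_assoc]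
    linear_combination X k * hf

variable {u : K} {l : ℕ+}

theorem inl_add_eps_pow_mul (hu : u ^ (l : ℕ) = 1) (n : ℕ) :
    (inl u + ε : K[ε]) ^ ((l : ℕ) * n) = 1 + inl (((l : ℕ) * n : K) * u⁻¹) * ε := by
  have hu₀ : u ≠ 0 := fun h => by simp [h] at hu
  have hpow : u ^ ((l : ℕ) * n) = 1 := by rw [pow_mul, hu, one_pow]
  ext
  · simp [hpow]
  · rcases n.eq_zero_or_pos with rfl | hn
    · simp
    · have hpred : u ^ ((l : ℕ) * n - 1) = u⁻¹ := by
        rw [pow_sub₀ u hu₀ (Nat.mul_pos l.pos hn), hpow, pow_one, one_mul]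
      simp [hpred]

theorem eigenvalue_nsmul_eps (q : K) (hu : u ^ (l : ℕ) = 1) (nu : Multiset ℕ+) :
    eigenvalue (inl q) (inl u + ε : K[ε]) ((l : ℕ) • nu) =
      inl (-(u⁻¹ * ((l : ℕ) * powSum q nu))) * ε := by
  rw [eigenvalue_eq_sum_count (s := nu.toFinset) _ _ _ fun a ha =>
    Multiset.mem_toFinset.2 (Multiset.mem_of_mem_nsmul ha), powSum,
    Finset.sum_multiset_map_count, Finset.mul_sum, Finset.mul_sum, ← Finset.sum_neg_distrib,
    inl_sum, Finset.sum_mul]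
  refine Finset.sum_congr rfl fun a _ => ?_
  rw [Multiset.countP_nsmul, Multiset.count_nsmul, inl_add_eps_pow_mul hu, inl_add_eps_pow_mul hu]
  ext
  · simp
  · simp
    ring

theorem translate_plethP_eps (hu : u ^ (l : ℕ) = 1) (f : SymFn K) :
    translate (fun k => 1 - (inl u + ε : K[ε]) ^ (k : ℕ)) (map (algebraMap K K[ε]) (plethP l f)) =
      Polynomial.C (map (algebraMap K K[ε]) (plethP l f)) - Polynomial.C (C ε) *
        (Polynomial.C (C u⁻¹) * tangent (plethP l f)).map (map (algebraMap K K[ε])) := by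
  induction f using MvPolynomial.induction_on with
  | C a =>
    rw [plethP_C, map_C, translate_C, derivation_C, mul_zero, Polynomial.map_zero,
      mul_zero]
    exact (sub_zero _).symm
  | add f g hf hg =>
    simp only [map_add, hf, hg, mul_add, Polynomial.map_add]
    ring
  | mul_X f k hf =>
    have hX : translate (fun k => 1 - (inl u + ε : K[ε]) ^ (k : ℕ)) (X (l * k)) =
        Polynomial.C (X (l * k)) - Polynomial.C (C ε) *
          (Polynomial.C (C u⁻¹) * tangent (X (l * k))).map (map (algebraMap K K[ε])) := by
      rw [translate_X, PNat.mul_coe, inl_add_eps_pow_mul hu, tangent, mkDerivation_X]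
      simp [TrivSqZeroExt.algebraMap_eq_inl]
      ring
    have hsq : (Polynomial.C (C ε) : Polynomial (SymFn K[ε])) * Polynomial.C (C ε) = 0 := by
      rw [← map_mul, ← C_mul, eps_mul_eps, C_0, map_zero]
    rw [map_mul, map_mul, map_mul, plethP_X, map_X, hf, hX, Derivation.leibniz]
    simp only [Polynomial.smul_eq_C_mul, Polynomial.map_add, Polynomial.map_mul,
      Polynomial.map_C, map_X, mul_add, map_mul]
    linear_combination Polynomial.C (map (algebraMap K K[ε]) (C u⁻¹)) ^ 2 *
      (tangent (plethP l f)).map (map (algebraMap K K[ε])) *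
      (tangent (X (l * k))).map (map (algebraMap K K[ε])) * hsq

theorem vertexOp_plethP_eps (q : K) (hu : u ^ (l : ℕ) = 1) (f : SymFn K) :
    vertexOp (inl u + ε : K[ε]) (fun n => map (algebraMap K K[ε]) (gSym q n))
        (map (algebraMap K K[ε]) (plethP l f)) =
      map (algebraMap K K[ε]) (plethP l f) -
        (ε : K[ε]) • map (algebraMap K K[ε]) (u⁻¹ • gDerivation q (plethP l f)) := by
  rw [vertexOp_apply, translate_plethP_eps hu, map_sub, umbral_C, umbral_C_mul, ← map_umbral,
    umbral_C_mul, gSym_zero, map_one, mul_one, smul_eq_C_mul, smul_eq_C_mul]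
  rfl

theorem eps_smul_vertexOp (q : K) (f : SymFn K) :
    (ε : K[ε]) • vertexOp (inl u + ε : K[ε]) (fun n => map (algebraMap K K[ε]) (gSym q n))
        (map (algebraMap K K[ε]) f) =
      (ε : K[ε]) • map (algebraMap K K[ε]) (vertexOp u (gSym q) f) := by
  rw [← eps_smul_map_fstHom, map_vertexOp]
  have hid (h : SymFn K) : map (fstHom K K K : K[ε] →+* K) (map (algebraMap K K[ε]) h) = h := by
    rw [map_map]
    exact map_id h
  have hu : (fstHom K K K : K[ε] →+* K) (inl u + ε) = u := by simp
  simp only [hid, hu]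

theorem exists_macdonaldOp_eq_gDerivation {q c : K} (hu : u ^ (l : ℕ) = 1) {g : SymFn K[ε]}
    {f : SymFn K} (hf : map (fstHom K K K : K[ε] →+* K) g = plethP l f)
    (hg : vertexOp (inl u + ε) (fun n => map (algebraMap K K[ε]) (gSym q n)) g - g =
      (inl (-(u⁻¹ * c)) * ε : K[ε]) • g) :
    ∃ f', macdonaldOp q u f' = gDerivation q (plethP l f) - c • plethP l f := by
  have hu₀ : u ≠ 0 := fun h => by simp [h] at hu
  obtain ⟨g₁, hg₁⟩ := exists_map_add_eps_smul_map g
  have hright : (inl (-(u⁻¹ * c)) * ε : K[ε]) • g =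
      (ε : K[ε]) • map (algebraMap K K[ε]) (-(u⁻¹ * c) • plethP l f) := by
    rw [mul_comm, mul_smul, ← eps_smul_map_fstHom, smul_eq_C_mul _ (inl (-(u⁻¹ * c))), map_mul,
      map_C, hf, ← smul_eq_C_mul]
    rfl
  have hleft : vertexOp (inl u + ε) (fun n => map (algebraMap K K[ε]) (gSym q n)) g - g =
      (ε : K[ε]) • map (algebraMap K K[ε])
        (macdonaldOp q u g₁ - u⁻¹ • gDerivation q (plethP l f)) := by
    rw [hg₁, hf, map_add, vertexOp_plethP_eps q hu, LinearMap.map_smul,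
      eps_smul_vertexOp, macdonaldOp,
      LinearMap.sub_apply, LinearMap.id_apply]
    simp only [map_sub, smul_sub]
    ring
  rw [hleft, hright, eps_smul_map_inj, sub_eq_iff_eq_add] at hg
  refine ⟨u • g₁, ?_⟩
  rw [map_smul, hg, smul_add, smul_smul, smul_smul, mul_neg, mul_inv_cancel_left₀ hu₀,
    mul_inv_cancel₀ hu₀, one_smul, neg_smul, neg_add_eq_sub]

end Deformation

section Deformable

variable {K : Type} [Field K]

/-- The functions `f` for which `p_l ∘ f`, a fixed vector of the Macdonald operator at `t = u`,
extends to first order in `t - u` to an eigenvector whose eigenvalue has derivative `-u⁻¹ a`;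
by `exists_macdonaldOp_eq_gDerivation` this is a solvability condition on the operator at `u`. -/
def deformable (l : ℕ+) (q u a : K) : Submodule K (SymFn K) :=
  (LinearMap.range (macdonaldOp q u)).comap
    (((gDerivation q : SymFn K →ₗ[K] SymFn K) - a • LinearMap.id).comp (plethP l).toLinearMap)

variable {l : ℕ+} {q u : K}

theorem mem_deformable {a : K} {f : SymFn K} : f ∈ deformable l q u a ↔
    gDerivation q (plethP l f) - a • plethP l f ∈ LinearMap.range (macdonaldOp q u) :=
  Iff.rfl

theorem one_mem_deformable : (1 : SymFn K) ∈ deformable l q u 0 :=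
  mem_deformable.2 ⟨0, by rw [map_zero, map_one, Derivation.map_one_eq_zero, zero_smul, sub_zero]⟩

theorem mul_mem_deformable (hu : u ^ (l : ℕ) = 1) {a b : K} {f g : SymFn K}
    (hf : f ∈ deformable l q u a) (hg : g ∈ deformable l q u b) :
    f * g ∈ deformable l q u (a + b) := by
  obtain ⟨f', hf⟩ := mem_deformable.1 hf
  obtain ⟨g', hg⟩ := mem_deformable.1 hg
  refine mem_deformable.2 ⟨plethP l g * f' + plethP l f * g', ?_⟩
  rw [map_add, macdonaldOp_plethP_mul q hu, macdonaldOp_plethP_mul q hu, hf, hg, map_mul,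
    Derivation.leibniz]
  simp only [smul_eq_mul, smul_eq_C_mul, C_add]
  ring

theorem hPar_mem_deformable (hu : u ^ (l : ℕ) = 1)
    (h : ∀ n : ℕ+, hsym (n : ℕ) ∈ deformable l q u ((l : ℕ) * (q ^ (n : ℕ) - 1)))
    (nu : Multiset ℕ+) : hPar nu ∈ deformable l q u ((l : ℕ) * powSum q nu) := by
  induction nu using Multiset.induction_on with
  | empty =>
    rw [powSum, Multiset.map_zero, Multiset.sum_zero, mul_zero]
    exact hPar_zero (R := K) ▸ one_mem_deformable
  | cons n nu ih =>
    rw [powSum, Multiset.map_cons, Multiset.sum_cons, mul_add, ← Multiset.singleton_add, hPar_add,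
      ← ofPart_coe, hPar_ofPart]
    exact mul_mem_deformable hu (h n) ih

variable [CharZero K]

/-- The difference of two deformation conditions lands in the range of `p_l ∘ -`, which meets the
range of the Macdonald operator trivially. -/
theorem mem_span_hPar_of_mem_deformable (hu : IsPrimitiveRoot u (l : ℕ))
    (hE : ∀ lam, eigenvalue q u lam = 0 → ∃ nu, lam = (l : ℕ) • nu)
    (hinj : Function.Injective (powSum q))
    (h : ∀ n : ℕ+, hsym (n : ℕ) ∈ deformable l q u ((l : ℕ) * (q ^ (n : ℕ) - 1)))
    {nu : Multiset ℕ+} {f : SymFn K} (hf : f ∈ deformable l q u ((l : ℕ) * powSum q nu)) :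
    f ∈ Submodule.span K {hPar nu} := by
  obtain ⟨c, rfl⟩ := Finsupp.mem_span_range_iff_exists_finsupp.1
    (span_range_hPar.ge (Submodule.mem_top (x := f)))
  have hplethP : plethP l (∑ ka ∈ c.support, (c ka * ((l : ℕ) * powSum q ka -
      (l : ℕ) * powSum q nu)) • hPar ka) ∈ LinearMap.range (macdonaldOp q u) := by
    have hsum : ∑ ka ∈ c.support, c ka • (gDerivation q (plethP l (hPar ka)) -
        ((l : ℕ) * powSum q ka) • plethP l (hPar ka)) ∈ LinearMap.range (macdonaldOp q u) :=
      sum_mem fun ka _ => Submodule.smul_mem _ _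
        (mem_deformable.1 (hPar_mem_deformable hu.pow_eq_one h ka))
    rw [mem_deformable, Finsupp.sum, map_sum, map_sum, Finset.smul_sum,
      ← Finset.sum_sub_distrib] at hf
    convert sub_mem hf hsum using 1
    rw [map_sum, ← Finset.sum_sub_distrib]
    refine Finset.sum_congr rfl fun ka _ => ?_
    rw [map_smul, map_smul, Derivation.map_smul]
    module
  obtain ⟨f', hf'⟩ := hplethP
  have hzero := linearIndependent_iff'.1 linearIndependent_hPar _ _
    (eq_zero_of_macdonaldOp_eq_plethP hu hE hf')
  refine sum_mem fun ka hka => Submodule.smul_mem _ _ ?_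
  have hsub := (mul_eq_zero.1 (hzero ka hka)).resolve_left (Finsupp.mem_support_iff.1 hka)
  rw [← mul_sub, mul_eq_zero, sub_eq_zero] at hsub
  rw [hinj (hsub.resolve_left (Nat.cast_ne_zero.2 l.ne_zero))]
  exact Submodule.mem_span_singleton_self _

end Deformable

section Eigenvector

variable {K A B : Type} [Field K] [CommRing A] [Algebra K A] [CommRing B] [Algebra K B]

/-- `g` is an eigenvector, with the eigenvalue attached to `λ`, of the Macdonald operator with
parameters `q` in `K` and `t` in the `K`-algebra `A`. Letting `A` vary moves eigenvectors between
`K(t)`, `K[t]`, `K[ε]` and `K`. -/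
def IsMacdonaldEigenvector (q : K) (t : A) (lam : Multiset ℕ+) (g : SymFn A) : Prop :=
  vertexOp t (fun n => map (algebraMap K A) (gSym q n)) g - g =
    eigenvalue (algebraMap K A q) t lam • g

namespace IsMacdonaldEigenvector

variable {q : K} {t : A} {lam : Multiset ℕ+} {g : SymFn A}

theorem map_iff_map_eq (φ : A →ₐ[K] B) :
    IsMacdonaldEigenvector q (φ t) lam (map (φ : A →+* B) g) ↔
      map (φ : A →+* B) (vertexOp t (fun n => map (algebraMap K A) (gSym q n)) g - g) =
        map (φ : A →+* B) (eigenvalue (algebraMap K A q) t lam • g) := by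
  rw [IsMacdonaldEigenvector, map_sub, map_vertexOp, smul_eq_C_mul, smul_eq_C_mul, map_mul, map_C,
    map_eigenvalue (φ : A →+* B)]
  simp only [map_map, AlgHom.comp_algebraMap, RingHom.coe_coe, AlgHom.commutes]

theorem map_algHom (hg : IsMacdonaldEigenvector q t lam g) (φ : A →ₐ[K] B) :
    IsMacdonaldEigenvector q (φ t) lam (map (φ : A →+* B) g) :=
  (map_iff_map_eq φ).2 (congrArg _ hg)

theorem smul (hg : IsMacdonaldEigenvector q t lam g) (c : A) :
    IsMacdonaldEigenvector q t lam (c • g) := by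
  rw [IsMacdonaldEigenvector, LinearMap.map_smul, ← smul_sub, hg, smul_comm]

theorem of_map_algHom {φ : A →ₐ[K] B} (hφ : Function.Injective φ)
    (hg : IsMacdonaldEigenvector q (φ t) lam (map (φ : A →+* B) g)) :
    IsMacdonaldEigenvector q t lam g :=
  map_injective _ hφ ((map_iff_map_eq φ).1 hg)

end IsMacdonaldEigenvector

theorem isMacdonaldEigenvector_iff [CharZero K] {L : Type} [Field L] [Algebra K L] {q : K} {t : L}
    {lam : Multiset ℕ+} {g : SymFn L} : IsMacdonaldEigenvector q t lam g ↔
      macdonaldOp (algebraMap K L q) t g = eigenvalue (algebraMap K L q) t lam • g := by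
  have : CharZero L := charZero_of_injective_algebraMap (algebraMap K L).injective
  simp only [IsMacdonaldEigenvector, map_gSym]
  rfl

section RootOfUnity

open DualNumber TrivSqZeroExt

variable [CharZero K] {q u : K} {l : ℕ+}

theorem IsMacdonaldEigenvector.exists_mem_deformable (hu : IsPrimitiveRoot u (l : ℕ))
    (hE : ∀ lam, eigenvalue q u lam = 0 → ∃ nu, lam = (l : ℕ) • nu) {nu : Multiset ℕ+}
    {g : SymFn (Polynomial K)}
    (hg : IsMacdonaldEigenvector q (Polynomial.X : Polynomial K) ((l : ℕ) • nu) g) :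
    ∃ f ∈ deformable l q u ((l : ℕ) * powSum q nu),
      plethP l f = map (Polynomial.evalRingHom u) g := by
  let φ : Polynomial K →ₐ[K] K[ε] := Polynomial.aeval (inl u + ε)
  have hfst : map (fstHom K K K : K[ε] →+* K) (map (φ : Polynomial K →+* K[ε]) g) =
      map (Polynomial.evalRingHom u) g := by
    rw [map_map]
    congr 2
    ext <;> simp [φ]
  have heps := hg.map_algHom φ
  rw [show φ Polynomial.X = inl u + ε from Polynomial.aeval_X _, IsMacdonaldEigenvector,
    TrivSqZeroExt.algebraMap_eq_inl, eigenvalue_nsmul_eps q hu.pow_eq_one] at heps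
  have hzero : macdonaldOp q u (map (Polynomial.evalRingHom u) g) = plethP l 0 := by
    have heval := isMacdonaldEigenvector_iff.1 (hg.map_algHom (Polynomial.aeval u))
    rwa [Polynomial.aeval_X, eigenvalue_nsmul_eq_zero _ hu.pow_eq_one, zero_smul,
      ← map_zero (plethP l)] at heval
  obtain ⟨f, hf⟩ := mem_range_plethP_of_macdonaldOp hu hE hzero
  refine ⟨f, mem_deformable.2 ?_, hf⟩
  exact exists_macdonaldOp_eq_gDerivation hu.pow_eq_one (hfst.trans hf.symm) heps

end RootOfUnity

end Eigenvector

section EigenLift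

variable {K : Type} [Field K]

theorem hasDegree_of_plethP {l : ℕ+} {n : ℕ} {f : SymFn K}
    (h : HasDegree (plethP l f) ((l : ℕ) * n)) : HasDegree f n := fun m hm => by
  rw [← coeff_rename_mapDomain (l * ·) (mul_right_injective l), ← plethP_eq_rename] at hm
  refine Nat.eq_of_mul_eq_mul_left l.pos ((Eq.symm ?_).trans (h hm))
  rw [Finsupp.weight_apply, Finsupp.weight_apply, Finsupp.sum_mapDomain_index
    (h := fun (k : ℕ+) e => e • (k : ℕ)) (fun _ => zero_smul ..) fun _ _ _ => add_smul ..,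
    Finsupp.mul_sum]
  refine Finsupp.sum_congr fun k _ => ?_
  rw [PNat.mul_coe, smul_eq_mul, smul_eq_mul, mul_left_comm]

theorem wt_cons (a : ℕ+) (lam : Multiset ℕ+) : wt (a ::ₘ lam) = a + wt lam := by
  rw [wt, wt, Multiset.map_cons, Multiset.sum_cons]

theorem wt_singleton (a : ℕ+) : wt {a} = a := by rw [← ofPart_coe, wt_ofPart]

theorem wt_nsmul (n : ℕ) (lam : Multiset ℕ+) : wt (n • lam) = n * wt lam := by
  rw [wt, wt, Multiset.map_nsmul, Multiset.sum_nsmul, smul_eq_mul]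

theorem eq_singleton_of_wt_eq {n : ℕ+} {lam : Multiset ℕ+} (hn : n ∈ lam) (hwt : wt lam = n) :
    lam = {n} := by
  obtain ⟨mu, rfl⟩ := Multiset.exists_cons_of_mem hn
  rcases mu.empty_or_exists_mem with rfl | ⟨b, hb⟩
  · rfl
  obtain ⟨mu, rfl⟩ := Multiset.exists_cons_of_mem hb
  rw [wt_cons, wt_cons] at hwt
  have := b.pos
  omega

theorem le_wt_of_mem {a : ℕ+} {lam : Multiset ℕ+} (ha : a ∈ lam) : (a : ℕ) ≤ wt lam := by
  obtain ⟨mu, rfl⟩ := Multiset.exists_cons_of_mem ha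
  exact wt_cons a mu ▸ Nat.le_add_right _ _

theorem eq_singleton_of_key_le {n : ℕ+} {ka : Multiset ℕ+} (hka : key {n} ≤ key ka)
    (hwt : wt ka = n) : ka = {n} := by
  by_contra hne
  have hlt (y : ℕ+) (hy : y ∈ ka) : y < n :=
    lt_of_le_of_ne (PNat.coe_le_coe _ _ |>.1 (hwt ▸ le_wt_of_mem hy)) fun h =>
      hne (eq_singleton_of_wt_eq (h ▸ hy) hwt)
  exact hka.not_gt (key_lt_key_iff.2 (Or.inr ⟨hwt.trans (wt_singleton n).symm,
    colex_lt_of_mem (Multiset.mem_singleton_self n) hlt⟩))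

theorem mem_span_hsym {n : ℕ+} {f : SymFn K} (hdeg : HasDegree f n)
    (hf : f ∈ Submodule.span K (hPar '' {ka | key {n} ≤ key ka})) :
    f ∈ Submodule.span K {hsym (n : ℕ)} := by
  rw [← hdeg.weightedHomogeneousComponent_same]
  refine Submodule.span_le (p := (Submodule.span K {hsym (n : ℕ)}).comap
    (weightedHomogeneousComponent _ (n : ℕ))).2 ?_ hf
  rintro _ ⟨ka, hka, rfl⟩
  rw [SetLike.mem_coe, Submodule.mem_comap]
  rcases eq_or_ne (wt ka) n with hwt | hwt
  · obtain rfl := eq_singleton_of_key_le hka hwt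
    rw [← ofPart_coe, hPar_ofPart, (hasDegree_hsym _).weightedHomogeneousComponent_same]
    exact Submodule.mem_span_singleton_self _
  · rw [(hasDegree_hPar ka).weightedHomogeneousComponent_ne _ hwt.symm]
    exact zero_mem _

/-- A multiple of `Q'_λ(x; q⁻¹, t)` with coefficients polynomial in `t` that does not vanish at
`t = u`. -/
structure IsEigenLift (q u : K) (lam : Multiset ℕ+) (g : SymFn (Polynomial K)) : Prop where
  isEigenvector : IsMacdonaldEigenvector q (Polynomial.X : Polynomial K) lam g
  hasDegree : HasDegree g (wt lam)
  map_eval_ne_zero : map (Polynomial.evalRingHom u) g ≠ 0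
  hall_schur : ∀ mu, key mu < key lam → hall g (map Polynomial.C (schur mu)) = 0

namespace IsEigenLift

variable [CharZero K] {q u : K} {l : ℕ+} {nu : Multiset ℕ+} {g : SymFn (Polynomial K)}

theorem key_le (hg : IsEigenLift q u ((l : ℕ) • nu) g) (hu : IsPrimitiveRoot u (l : ℕ))
    {f : SymFn K} (hf : plethP l f = map (Polynomial.evalRingHom u) g) {ka : Multiset ℕ+} {c : K}
    (hc : c ≠ 0) (hka : f - c • hPar ka ∈ above K ka) : key nu ≤ key ka := by
  by_contra! hlt
  have hlead := isTriangularDual_schur.hall_eq (plethP_sub_smul_hPar_mem_above l hu hka)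
  have hzero := congrArg (Polynomial.evalRingHom u) (hg.hall_schur _ (key_nsmul_lt l.pos hlt))
  rw [map_hall, map_map, map_schur, ← hf, hlead, map_zero] at hzero
  exact mul_ne_zero hc (pow_ne_zero _ (neg_ne_zero.2 one_ne_zero)) hzero

theorem hsym_mem_deformable {n : ℕ+} (hg : IsEigenLift q u ((l : ℕ) • {n}) g)
    (hu : IsPrimitiveRoot u (l : ℕ))
    (hE : ∀ lam, eigenvalue q u lam = 0 → ∃ nu, lam = (l : ℕ) • nu) :
    hsym (n : ℕ) ∈ deformable l q u ((l : ℕ) * (q ^ (n : ℕ) - 1)) := by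
  obtain ⟨f, hmem, hf⟩ := hg.isEigenvector.exists_mem_deformable hu hE
  have hf0 : f ≠ 0 := by
    rintro rfl
    exact hg.map_eval_ne_zero (hf.symm.trans (map_zero _))
  obtain ⟨ka, c, hc, hka⟩ := exists_sub_smul_hPar_mem_above hf0
  have hle := hg.key_le hu hf hc hka
  have hspan : f ∈ Submodule.span K (hPar '' {ka | key {n} ≤ key ka}) := by
    rw [← sub_add_cancel f (c • hPar ka)]
    exact add_mem (Submodule.span_mono (Set.image_mono fun _ h => hle.trans (le_of_lt h)) hka)
      (Submodule.smul_mem _ c (Submodule.subset_span ⟨ka, hle, rfl⟩))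
  have hdeg : HasDegree f n := by
    refine hasDegree_of_plethP (l := l) fun m hm => ?_
    rw [hf, coeff_map] at hm
    rw [hg.hasDegree (ne_zero_of_map hm), wt_nsmul, wt_singleton]
  obtain ⟨d, rfl⟩ := Submodule.mem_span_singleton.1 (mem_span_hsym hdeg hspan)
  rw [← show powSum q {n} = q ^ (n : ℕ) - 1 by simp [powSum]]
  exact (Submodule.smul_mem_iff _ (left_ne_zero_of_smul hf0)).1 hmem

theorem exists_smul_plethP_hPar (hg : IsEigenLift q u ((l : ℕ) • nu) g)
    (hu : IsPrimitiveRoot u (l : ℕ))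
    (hE : ∀ lam, eigenvalue q u lam = 0 → ∃ nu, lam = (l : ℕ) • nu)
    (hinj : Function.Injective (powSum q))
    (h : ∀ n : ℕ+, ∃ g', IsEigenLift q u ((l : ℕ) • {n}) g') :
    ∃ c : K, c ≠ 0 ∧ map (Polynomial.evalRingHom u) g = c • plethP l (hPar nu) := by
  have hsym_mem (n : ℕ+) : hsym (n : ℕ) ∈ deformable l q u ((l : ℕ) * (q ^ (n : ℕ) - 1)) :=
    (h n).choose_spec.hsym_mem_deformable hu hE
  obtain ⟨f, hmem, hf⟩ := hg.isEigenvector.exists_mem_deformable hu hE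
  obtain ⟨c, rfl⟩ := Submodule.mem_span_singleton.1
    (mem_span_hPar_of_mem_deformable hu hE hinj hsym_mem hmem)
  rw [map_smul] at hf
  exact ⟨c, left_ne_zero_of_smul (hf ▸ hg.map_eval_ne_zero), hf.symm⟩

end IsEigenLift

end EigenLift

/-! ### Specialization at a root of unity -/

section Denominators

theorem exists_map_eq_smul_not_C_dvd {σ A L : Type*} [CommRing A] [IsDomain A]
    [UniqueFactorizationMonoid A] [Field L] [Algebra A L] [IsFractionRing A L]
    {p : A} (hp₀ : p ≠ 0) (hp : ¬ IsUnit p) {f : MvPolynomial σ L} (hf : f ≠ 0) :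
    ∃ (g : MvPolynomial σ A) (c : L), map (algebraMap A L) g = c • f ∧ ¬ C p ∣ g := by
  let _ : Algebra (MvPolynomial σ A) (MvPolynomial σ L) := algebraMvPolynomial
  obtain ⟨⟨g, _, d, hd, rfl⟩, hg⟩ := IsLocalization.surj ((nonZeroDivisors A).map (C (σ := σ))) f
  have hd' : algebraMap A L d ≠ 0 := IsFractionRing.to_map_ne_zero_of_mem_nonZeroDivisors hd
  rw [algebraMap_def, map_C, mul_comm, ← smul_eq_C_mul] at hg
  have hg0 : g ≠ 0 := by
    rintro rfl
    exact smul_ne_zero hd' hf (hg.trans (map_zero _))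
  obtain ⟨n, g', hdvd, rfl⟩ := WfDvdMonoid.max_power_factor' hg0 ((isUnit_map_iff C p).not.2 hp)
  have hpn : algebraMap A L p ^ n ≠ 0 :=
    pow_ne_zero _ ((map_ne_zero_iff _ (IsFractionRing.injective A L)).2 hp₀)
  refine ⟨g', (algebraMap A L p ^ n)⁻¹ * algebraMap A L d, ?_, hdvd⟩
  rw [mul_smul, hg, map_mul, map_pow, map_C, ← C_pow, ← smul_eq_C_mul, inv_smul_smul₀ hpn]

theorem map_evalRingHom_ne_zero {σ K : Type*} [Field K] {u : K} {g : MvPolynomial σ (Polynomial K)}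
    (h : ¬ C (Polynomial.X - Polynomial.C u) ∣ g) : map (Polynomial.evalRingHom u) g ≠ 0 := by
  refine fun h0 => h ((C_dvd_iff_dvd_coeff _ _).2 fun m => Polynomial.dvd_iff_isRoot.2 ?_)
  have := congrArg (coeff m) h0
  rwa [coeff_map, coeff_zero] at this

theorem ratFunc_eval_coeff {σ K : Type*} [Field K] {u : K} {f : MvPolynomial σ (RatFunc K)}
    {g : MvPolynomial σ (Polynomial K)} {a : Polynomial K} (ha : a.eval u ≠ 0)
    (h : map (algebraMap (Polynomial K) (RatFunc K)) g = algebraMap _ (RatFunc K) a • f)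
    (m : σ →₀ ℕ) : RatFunc.eval (RingHom.id K) u (coeff m f) = (coeff m g).eval u / a.eval u := by
  have ha0 : a ≠ 0 := by
    rintro rfl
    exact ha Polynomial.eval_zero
  have hm := congrArg (coeff m) h
  rw [coeff_map, coeff_smul, smul_eq_mul, mul_comm] at hm
  have hdiv : coeff m f = algebraMap _ _ (coeff m g) / algebraMap _ _ a :=
    eq_div_of_mul_eq (RatFunc.algebraMap_ne_zero ha0) hm.symm
  have hdenom : (coeff m f).denom.eval u ≠ 0 := fun h0 => ha <|
    Polynomial.eval_eq_zero_of_dvd_of_eval_eq_zero (hdiv ▸ RatFunc.denom_div_dvd _ _) h0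
  have hnum := congrArg (Polynomial.eval u) ((RatFunc.num_mul_eq_mul_denom_iff ha0).2 hdiv)
  rw [Polynomial.eval_mul, Polynomial.eval_mul] at hnum
  rw [RatFunc.eval, Polynomial.eval₂_id, Polynomial.eval₂_id, div_eq_div_iff hdenom ha, hnum]

end Denominators

section Lift

theorem hasDegree_Qprime {R : Type} [Field R] {q t : R}
    {P : Multiset ℕ+ → SymFn R} (hP : IsMacdonaldBasis q t P) (lam : Multiset ℕ+) :
    HasDegree (Qprime q t P lam) (wt lam) := by
  have hPlam : HasDegree (P lam) (wt lam) := by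
    have hle : Submodule.span R (schur '' {mu | StrictDom mu lam}) ≤
        weightedHomogeneousSubmodule R (fun k : ℕ+ => (k : ℕ)) (wt lam) := by
      refine Submodule.span_le.2 ?_
      rintro _ ⟨mu, hmu, rfl⟩
      exact hmu.2.1 ▸ hasDegree_schur mu
    rw [← sub_add_cancel (P lam) (schur lam)]
    exact (hle (hP.1 lam)).add (hasDegree_schur lam)
  intro m hm
  rw [Qprime_eq_smul_qtHom, coeff_smul, qtHom, coeff_scaleHom] at hm
  exact hPlam (left_ne_zero_of_mul (right_ne_zero_of_mul hm))

section Pairing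

variable {R : Type} [Field R] [CharZero R] {q t : R} {P : Multiset ℕ+ → SymFn R}

theorem hall_Qprime_schur (hq : ∀ k : ℕ+, q ^ (k : ℕ) ≠ 1) (ht : ∀ k : ℕ+, t ^ (k : ℕ) ≠ 1)
    (hP : IsMacdonaldBasis q t P) {lam mu : Multiset ℕ+} (h : key mu ≤ key lam) :
    hall (Qprime q t P lam) (schur mu) = if lam = mu then 1 else 0 := by
  rw [← sub_add_cancel (Qprime q t P lam) (hPar lam), map_add, LinearMap.add_apply,
    isTriangularDual_schur.hall_of_mem_above h (Qprime_sub_hPar_mem_above hq ht hP lam), zero_add,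
    hall_hPar_schur h]

theorem Qprime_ne_zero (hq : ∀ k : ℕ+, q ^ (k : ℕ) ≠ 1) (ht : ∀ k : ℕ+, t ^ (k : ℕ) ≠ 1)
    (hP : IsMacdonaldBasis q t P) (lam : Multiset ℕ+) : Qprime q t P lam ≠ 0 := fun h => by
  have hpair := hall_Qprime_schur hq ht hP (le_refl (key lam))
  rw [h, map_zero, LinearMap.zero_apply, if_pos rfl] at hpair
  exact zero_ne_one hpair

end Pairing

variable {K : Type} [Field K] {q : K}

theorem ratFunc_C_pow_ne_one (hq : ∀ k : ℕ+, q ^ (k : ℕ) ≠ 1) (k : ℕ+) :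
    RatFunc.C q ^ (k : ℕ) ≠ 1 := by
  rw [← map_pow, ← map_one RatFunc.C]
  exact RatFunc.C_injective.ne (hq k)

theorem ratFunc_X_pow_ne_one (k : ℕ+) : (RatFunc.X : RatFunc K) ^ (k : ℕ) ≠ 1 := by
  rw [← RatFunc.algebraMap_X, ← map_pow, ← map_one (algebraMap (Polynomial K) (RatFunc K))]
  refine (RatFunc.algebraMap_injective K).ne fun h => k.ne_zero ?_
  rw [← Polynomial.natDegree_X_pow (R := K) k, h, Polynomial.natDegree_one]

variable [CharZero K] {P : Multiset ℕ+ → SymFn (RatFunc K)}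

theorem isMacdonaldEigenvector_Qprime (hq₀ : q ≠ 0) (hq : ∀ k : ℕ+, q ^ (k : ℕ) ≠ 1)
    (hP : IsMacdonaldBasis (RatFunc.C q) RatFunc.X P) (lam : Multiset ℕ+) :
    IsMacdonaldEigenvector q⁻¹ (RatFunc.X : RatFunc K) lam
      (Qprime (RatFunc.C q) RatFunc.X P lam) := by
  rw [isMacdonaldEigenvector_iff, map_inv₀, RatFunc.algebraMap_eq_C]
  exact macdonaldOp_Qprime ((map_ne_zero _).2 hq₀) (ratFunc_C_pow_ne_one hq) ratFunc_X_pow_ne_one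
    hP lam

theorem exists_isEigenLift (hq₀ : q ≠ 0) (hq : ∀ k : ℕ+, q ^ (k : ℕ) ≠ 1) (u : K)
    (hP : IsMacdonaldBasis (RatFunc.C q) RatFunc.X P) (lam : Multiset ℕ+) :
    ∃ g, IsEigenLift q⁻¹ u lam g ∧ map (algebraMap (Polynomial K) (RatFunc K)) g =
      algebraMap _ (RatFunc K) (hall g (map Polynomial.C (schur lam))) •
        Qprime (RatFunc.C q) RatFunc.X P lam := by
  have hC := ratFunc_C_pow_ne_one hq
  have hX := ratFunc_X_pow_ne_one (K := K)
  obtain ⟨g, c, hmap, hdvd⟩ := exists_map_eq_smul_not_C_dvd (Polynomial.X_sub_C_ne_zero u)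
    (Polynomial.not_isUnit_X_sub_C u) (Qprime_ne_zero hC hX hP lam)
  have hinj := RatFunc.algebraMap_injective K
  have hhall {mu : Multiset ℕ+} (h : key mu ≤ key lam) :
      algebraMap _ (RatFunc K) (hall g (map Polynomial.C (schur mu))) =
        if lam = mu then c else 0 := by
    rw [map_hall, map_map, map_schur, hmap, map_smul, LinearMap.smul_apply,
      hall_Qprime_schur hC hX hP h, smul_eq_mul, mul_ite, mul_one, mul_zero]
  refine ⟨g, ⟨?_, ?_, map_evalRingHom_ne_zero hdvd, fun mu hmu => ?_⟩, ?_⟩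
  · refine .of_map_algHom (φ := IsScalarTower.toAlgHom K (Polynomial K) (RatFunc K)) hinj ?_
    rw [IsScalarTower.coe_toAlgHom', IsScalarTower.coe_toAlgHom, RatFunc.algebraMap_X, hmap]
    exact (isMacdonaldEigenvector_Qprime hq₀ hq hP lam).smul c
  · intro m hm
    refine hasDegree_Qprime hP lam (right_ne_zero_of_smul (a := c) ?_)
    rw [← coeff_smul, ← hmap, coeff_map]
    exact (map_ne_zero_iff _ hinj).2 hm
  · refine (map_eq_zero_iff _ hinj).1 ((hhall hmu.le).trans (if_neg ?_))
    rintro rfl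
    exact hmu.ne rfl
  · rw [hmap, hhall le_rfl, if_pos rfl]

end Lift

section Transcendental

variable {F K : Type*} [Field F] [Field K] [Algebra F K] {q : K}

theorem ne_zero_of_transcendental (hq : Transcendental F q) : q ≠ 0 := by
  rintro rfl
  exact hq isAlgebraic_zero

theorem pow_ne_one_of_transcendental (hq : Transcendental F q) (k : ℕ+) : q ^ (k : ℕ) ≠ 1 :=
  fun h => hq (IsAlgebraic.of_pow k.pos (h ▸ isAlgebraic_one))

theorem transcendental_inv (hq : Transcendental F q) : Transcendental F q⁻¹ :=
  IsAlgebraic.inv_iff.not.2 hq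

end Transcendental

theorem hall_plethP_hPar_schur {R : Type} [Field R] [CharZero R] {l : ℕ+} {u : R}
    (hu : IsPrimitiveRoot u (l : ℕ)) (nu : Multiset ℕ+) :
    hall (plethP l (hPar (R := R) nu)) (schur ((l : ℕ) • nu)) = (-1) ^ (((l : ℕ) - 1) * wt nu) :=
  isTriangularDual_schur.hall_eq (plethP_hPar_sub_mem_above l hu nu)

theorem coeff_specT (c : KK) (f : SymFn FF) (m : ℕ+ →₀ ℕ) :
    coeff m (specT c f) = evalT c (coeff m f) := by
  rw [specT, coeff_sum]
  simp only [coeff_monomial]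
  rw [Finset.sum_ite_eq', ite_eq_left_iff, notMem_support_iff]
  intro h
  rw [h, evalT, RatFunc.eval_zero]

end Macdonald

open Macdonald in
theorem Qprime_repeated_partition_root_of_unity_general {F K : Type} [Field F] [Field K]
    [CharZero K] [Algebra F K] {q : K} (hq : Transcendental F q) {ζ : F} (l : ℕ+)
    (hζ : IsPrimitiveRoot ζ (l : ℕ)) {P : Multiset ℕ+ → SymFn (RatFunc K)}
    (hP : IsMacdonaldBasis (RatFunc.C q) RatFunc.X P) (nu : Multiset ℕ+) (m : ℕ+ →₀ ℕ) :
    RatFunc.eval (RingHom.id K) (algebraMap F K ζ)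
        (coeff m (Qprime (RatFunc.C q) RatFunc.X P ((l : ℕ) • nu))) =
      coeff m ((-1 : K) ^ (((l : ℕ) - 1) * wt nu) • plethP l (hPar nu)) := by
  have : CharZero F := (algebraMap F K).charZero_iff (algebraMap F K).injective |>.2 ‹_›
  have hqinv := transcendental_inv hq
  have hu : IsPrimitiveRoot (algebraMap F K ζ) (l : ℕ) :=
    hζ.map_of_injective (algebraMap F K).injective
  have hlift := exists_isEigenLift (ne_zero_of_transcendental hq)
    (pow_ne_one_of_transcendental hq) (algebraMap F K ζ) hP
  obtain ⟨g, hg, hmap⟩ := hlift ((l : ℕ) • nu)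
  obtain ⟨c, hc, hgc⟩ := hg.exists_smul_plethP_hPar hu
    (fun _ => exists_eq_nsmul_of_eigenvalue_eq_zero hqinv hζ) (powSum_injective hqinv)
    fun n => (hlift _).imp fun _ h => h.1
  have hlead : (hall g (map Polynomial.C (schur ((l : ℕ) • nu)))).eval (algebraMap F K ζ) =
      c * (-1) ^ (((l : ℕ) - 1) * wt nu) := by
    rw [← Polynomial.coe_evalRingHom, map_hall, map_map, map_schur, hgc, map_smul,
      LinearMap.smul_apply, hall_plethP_hPar_schur hu, smul_eq_mul]
  have hsign : (-1 : K) ^ (((l : ℕ) - 1) * wt nu) ≠ 0 := pow_ne_zero _ (neg_ne_zero.2 one_ne_zero)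
  rw [ratFunc_eval_coeff (hlead.trans_ne (mul_ne_zero hc hsign)) hmap, hlead,
    ← Polynomial.coe_evalRingHom, ← coeff_map, hgc, coeff_smul, coeff_smul, smul_eq_mul,
    smul_eq_mul, mul_div_mul_left _ _ hc, div_eq_iff hsign, mul_right_comm, ← mul_pow,
    neg_one_mul, neg_neg, one_pow, one_mul]

/-- **Specialization of `Q'` for partitions of the form `ν^l`** (Corollary 5.3 of the
paper).  Let `ν` be a partition, `l > 0` and `ζ` a primitive `l`-th root of unity.  Then
`Q'_{ν^l}(x; q, ζ) = (-1)^{(l-1)|ν|} (p_l ∘ h_ν)(x)`, where `ν^l` repeats each part of `ν`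
exactly `l` times. -/
theorem Qprime_repeated_partition_root_of_unity
    (l : ℕ) (hl : 0 < l) (zeta : ℂ) (hzeta : IsPrimitiveRoot zeta l)
    (nu : Multiset ℕ+)
    (P : Multiset ℕ+ → SymFn FF) (hP : IsMacdonaldBasis qF tF P) :
    specT (RatFunc.C zeta) (Qprime qF tF P (l • nu)) =
      ((-1 : KK) ^ ((l - 1) * wt nu)) • plethP (⟨l, hl⟩ : ℕ+) (hPar (R := KK) nu) := by
  ext m
  rw [Macdonald.coeff_specT, evalT, ← RatFunc.algebraMap_eq_C]
  exact Qprime_repeated_partition_root_of_unity_general RatFunc.transcendental_X ⟨l, hl⟩ hzeta hP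
    nu m
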